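/- Fix N ≥ 1, k ≥ 2, and a k-tuple (m₁,…,m_k) of units modulo N. Let τ_{k,m}(x) be the number of n ≤ x with exactly k prime factors counted with multiplicity, written n = p₁p₂⋯p_k with p₁ ≤ p₂ ≤ … ≤ p_k, such that p_i ≡ m_i (mod N) for each i. Then τ_{k,m}(x) ~ (1/φ(N)^k) · x (log log x)^{k-1} / ((k-1)! log x) as x → ∞. -/

import Mathlib

open Filter Asymptotics
open scoped Classical

/-!
The primes in each reduced residue class modulo `N` have the expected density. The Dirichlet series
of the von Mangoldt function on the class extends continuously to the line `re s = 1` apart from its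
pole. Testing against a kernel which is the Fourier transform of a compactly supported function
(the square of a real Fourier transform, hence nonnegative) turns this into an asymptotic for
smoothed averages, by the Riemann–Lebesgue lemma, and monotonicity removes the smoothing.

By partial summation the sum of `1 / p` over the primes `p ≤ y` in a class is asymptotic to
`log log y / φ(N)`. Adding one prime at a time, the sum of `1 / (p₁ ⋯ p_r)` over nondecreasing
tuples grows like `(log log y / φ(N)) ^ r / r!`, since `∑ u_n U_n ^ j` behaves like the telescoping
sum of `U_n ^ (j + 1) / (j + 1)` when `U_n` is the partial sum of `u_n`.

Finally, count the products by their largest prime. If `q = p₁ ⋯ p_{k-1}` has all its factors below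
`x ^ ε`, there are about `x / (φ(N) q log x)` choices for `p_k`. The remaining `q` contribute
little: since `log log (x ^ ε)` and `log log x` are asymptotic, their sum of `1 / q` is
`o((log log x) ^ (k - 1))`, while each of them leaves `O(x / (q log x))` choices for `p_k`, because
`x ^ ε < p_k` forces `x ^ ε < x / q`.
-/

section Tauberian

open MeasureTheory Topology FourierTransform ComplexConjugate Convolution ContDiff

lemma conj_fourier_ofReal_of_even {f : ℝ → ℝ} (hf : f.Even) (v : ℝ) :
    conj (𝓕 (fun t ↦ (f t : ℂ)) v) = 𝓕 (fun t ↦ (f t : ℂ)) v := by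
  rw [Real.fourier_real_eq, ← integral_conj, ← integral_neg_eq_self]
  refine integral_congr_ae (.of_forall fun t ↦ ?_)
  simp [hf t, Circle.smul_def, Real.fourierChar_apply, ← Complex.exp_conj, map_ofNat]

lemma exists_hasCompactSupport_fourier_nonneg :
    ∃ (φ : ℝ → ℂ) (K : ℝ → ℝ), Continuous φ ∧ HasCompactSupport φ ∧ (∀ v, 𝓕 φ v = K v) ∧
      (∀ v, 0 ≤ K v) ∧ Integrable K ∧ 0 < ∫ v, K v := by
  let η : ContDiffBump (0 : ℝ) := default
  let f : ℝ → ℂ := fun t ↦ η t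
  have hf : ContDiff ℝ ∞ f := Complex.ofRealCLM.contDiff.comp η.contDiff
  have hfs : HasCompactSupport f := η.hasCompactSupport.comp_left Complex.ofReal_zero
  have hfi : Integrable f := hf.continuous.integrable_of_hasCompactSupport hfs
  let φ := f ⋆[ContinuousLinearMap.mul ℂ ℂ] f
  have hφ : ContDiff ℝ ∞ φ :=
    (hfs.contDiff_convolution_right (.mul ℝ ℂ) hfi.locallyIntegrable hf :)
  have hφs : HasCompactSupport φ := hfs.convolution _ hfs
  have hreal (v : ℝ) : ((𝓕 f v).re : ℂ) = 𝓕 f v :=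
    Complex.conj_eq_iff_re.1 (conj_fourier_ofReal_of_even (fun t ↦ η.neg t) v)
  have hφK (v : ℝ) : 𝓕 φ v = ((𝓕 f v).re ^ 2 : ℝ) := by
    rw [Real.fourier_mul_convolution_eq hfi hfi, Complex.ofReal_pow, hreal, sq]
  have hφS : 𝓕 φ = 𝓕 (hφs.toSchwartzMap hφ) := rfl
  have hK : (fun v ↦ (𝓕 f v).re ^ 2) = fun v ↦ (𝓕 φ v).re := by
    simp only [hφK, Complex.ofReal_re]
  have hKi : Integrable fun v ↦ (𝓕 f v).re ^ 2 := by
    rw [hK, hφS]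
    exact Complex.reCLM.integrable_comp (SchwartzMap.integrable (μ := volume) _)
  have hKc : Continuous fun v ↦ (𝓕 f v).re ^ 2 := by
    rw [hK, hφS]
    exact Complex.continuous_re.comp (SchwartzMap.continuous _)
  refine ⟨φ, fun v ↦ (𝓕 f v).re ^ 2, hφ.continuous, hφs, hφK, fun v ↦ sq_nonneg _, hKi,
    integral_pos_of_integrable_nonneg_nonzero hKc hKi (fun v ↦ sq_nonneg _) (x := 0) ?_⟩
  have h0 : 𝓕 f 0 = ((∫ t, η t : ℝ) : ℂ) := by
    simp [Real.fourier_real_eq, f, ← integral_complex_ofReal]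
  simpa [h0] using η.integral_pos (μ := volume).ne'

lemma fourier_fourierChar_smul (φ : ℝ → ℂ) (y v : ℝ) :
    𝓕 (fun t ↦ 𝐞 (t * y) • φ t) v = 𝓕 φ (v - y) := by
  simp only [Real.fourier_real_eq, smul_smul, ← AddChar.map_add_eq_mul, mul_sub, neg_sub,
    neg_add_eq_sub]

section Laplace

/-- The Laplace transform of `b` on the half-line, defined for `0 < re s` when `b` is bounded,
extends continuously to the closed half-plane `0 ≤ re s`. -/
def LaplaceExtendsContinuously (b : ℝ → ℂ) : Prop :=
  ∃ g : ℂ → ℂ, ContinuousOn g {s | 0 ≤ s.re} ∧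
    ∀ s : ℂ, 0 < s.re → g s = ∫ v in Set.Ioi (0 : ℝ), b v * Complex.exp (-(s * v))

lemma LaplaceExtendsContinuously.comp_mul_left {b : ℝ → ℂ} (hb : LaplaceExtendsContinuously b)
    {ε : ℝ} (hε : 0 < ε) : LaplaceExtendsContinuously fun v ↦ b (ε * v) := by
  obtain ⟨g, hg, hgb⟩ := hb
  refine ⟨fun s ↦ (ε⁻¹ : ℝ) * g (s / ε),
    continuousOn_const.mul (hg.comp (by fun_prop) fun s hs ↦ ?_), fun s hs ↦ ?_⟩
  · simpa only [Set.mem_ofPred_eq, Complex.div_ofReal_re] using div_nonneg hs hε.le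
  · have hscale := integral_comp_mul_left_Ioi
      (fun w ↦ b w * Complex.exp (-(s / ε * w))) 0 hε
    rw [mul_zero, ← hgb _ (by simpa using div_pos hs hε), Complex.real_smul] at hscale
    refine hscale.symm.trans (integral_congr_ae (.of_forall fun v ↦ ?_))
    have hε' : (ε : ℂ) ≠ 0 := Complex.ofReal_ne_zero.2 hε.ne'
    simp only [Complex.ofReal_mul, ← mul_assoc, div_mul_cancel₀ _ hε']

variable {φ b : ℝ → ℂ} {g : ℂ → ℂ} {M : ℝ}

lemma setIntegral_fourier_mul_exp_eq (hφ : Integrable φ)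
    (hb : AEStronglyMeasurable b (volume.restrict (Set.Ioi 0))) (hbM : ∀ v, 0 < v → ‖b v‖ ≤ M)
    (hgb : ∀ s : ℂ, 0 < s.re → g s = ∫ v in Set.Ioi (0 : ℝ), b v * Complex.exp (-(s * v)))
    {ε : ℝ} (hε : 0 < ε) (y : ℝ) :
    ∫ v in Set.Ioi (0 : ℝ), 𝓕 φ (v - y) * (b v * Real.exp (-(ε * v))) =
      ∫ t : ℝ, 𝐞 (t * y) • φ t * g (ε + 2 * Real.pi * Complex.I * t) := by
  have hφy : Integrable fun t : ℝ ↦ 𝐞 (t * y) • φ t := by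
    simpa [mul_comm] using (Real.fourierIntegral_convergent_iff (-y)).2 hφ
  have hexp : IntegrableOn (fun v ↦ Real.exp (-(ε * v))) (Set.Ioi 0) := by
    simpa only [neg_mul] using integrableOn_exp_mul_Ioi (neg_lt_zero.2 hε) 0
  have hbe : IntegrableOn (fun v ↦ b v * Real.exp (-(ε * v))) (Set.Ioi 0) :=
    hexp.ofReal.bdd_mul hb ((ae_restrict_iff' measurableSet_Ioi).2 (.of_forall hbM))
  have hlaplace (t : ℝ) : VectorFourier.fourierIntegral 𝐞 (volume.restrict (Set.Ioi 0))
      (innerₗ ℝ).flip (fun v ↦ b v * Real.exp (-(ε * v))) t =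
        g (ε + 2 * Real.pi * Complex.I * t) := by
    rw [hgb _ (by simpa using hε), VectorFourier.fourierIntegral]
    refine integral_congr_ae (.of_forall fun v ↦ ?_)
    simp [Circle.smul_def, Real.fourierChar_apply, add_mul, Complex.exp_add]
    ring_nf
  simp only [← fourier_fourierChar_smul φ y, ← hlaplace]
  exact VectorFourier.integral_fourierIntegral_smul_eq_flip Real.continuous_fourierChar
    continuous_inner hφy hbe

lemma tendsto_setIntegral_mul_exp_neg {h : ℝ → ℂ} (hh : IntegrableOn h (Set.Ioi 0)) :
    Tendsto (fun ε : ℝ ↦ ∫ v in Set.Ioi (0 : ℝ), h v * Real.exp (-(ε * v))) (𝓝[>] 0)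
      (𝓝 (∫ v in Set.Ioi (0 : ℝ), h v)) := by
  refine tendsto_integral_filter_of_dominated_convergence (fun v ↦ ‖h v‖) ?_ ?_ hh.norm ?_
  · exact .of_forall fun ε ↦ hh.aestronglyMeasurable.mul (by fun_prop)
  · filter_upwards [self_mem_nhdsWithin] with ε hε
    filter_upwards [ae_restrict_mem measurableSet_Ioi] with v hv
    rw [norm_mul, Complex.norm_real, Real.norm_eq_abs, Real.abs_exp]
    exact mul_le_of_le_one_right (norm_nonneg _)
      (Real.exp_le_one_iff.2 (neg_nonpos.2 (mul_pos hε hv).le))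
  · refine .of_forall fun v ↦ ?_
    have hcont : Continuous fun ε : ℝ ↦ h v * (Real.exp (-(ε * v)) : ℂ) := by fun_prop
    simpa using (hcont.tendsto 0).mono_left nhdsWithin_le_nhds

lemma tendsto_integral_mul_add_I_mul (hφ : Continuous φ) (hφs : HasCompactSupport φ)
    (hg : ContinuousOn g {s | 0 ≤ s.re}) :
    Tendsto (fun ε : ℝ ↦ ∫ t : ℝ, φ t * g (ε + 2 * Real.pi * Complex.I * t)) (𝓝[>] 0)
      (𝓝 (∫ t : ℝ, φ t * g (2 * Real.pi * Complex.I * t))) := by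
  have hcont : ContinuousOn
      (fun ε : ℝ ↦ ∫ t : ℝ, φ t * g (ε + 2 * Real.pi * Complex.I * t)) (Set.Ici 0) := by
    refine continuousOn_integral_of_compact_support hφs ?_ fun ε t _ ht ↦ by
      rw [image_eq_zero_of_notMem_tsupport ht, zero_mul]
    refine (hφ.comp continuous_snd).continuousOn.mul (hg.comp (by fun_prop) ?_)
    rintro ⟨ε, t⟩ ⟨hε, -⟩
    simpa using hε
  simpa using (hcont 0 Set.self_mem_Ici).tendsto.mono_left
    (nhdsWithin_mono 0 Set.Ioi_subset_Ici_self)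

/-- Letting `s` tend to the imaginary axis turns the integral into the Fourier transform at `-y` of
the integrable function `t ↦ φ t * g (2πit)`, to which the Riemann–Lebesgue lemma applies. -/
theorem tendsto_setIntegral_fourier_comp_sub_mul (hφ : Continuous φ) (hφs : HasCompactSupport φ)
    (hφi : Integrable (𝓕 φ)) (hb : AEStronglyMeasurable b (volume.restrict (Set.Ioi 0)))
    (hbM : ∀ v, 0 < v → ‖b v‖ ≤ M) (hbL : LaplaceExtendsContinuously b) :
    Tendsto (fun y : ℝ ↦ ∫ v in Set.Ioi (0 : ℝ), 𝓕 φ (v - y) * b v) atTop (𝓝 0) := by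
  obtain ⟨g, hg, hgb⟩ := hbL
  have hboundary (y : ℝ) : ∫ v in Set.Ioi (0 : ℝ), 𝓕 φ (v - y) * b v =
      ∫ t : ℝ, 𝐞 (t * y) • φ t * g (2 * Real.pi * Complex.I * t) := by
    have hφb : IntegrableOn (fun v ↦ 𝓕 φ (v - y) * b v) (Set.Ioi 0) :=
      (hφi.comp_sub_right y).integrableOn.mul_bdd hb
        ((ae_restrict_iff' measurableSet_Ioi).2 (.of_forall hbM))
    have hφy : Continuous fun t : ℝ ↦ 𝐞 (t * y) • φ t := by fun_prop
    refine tendsto_nhds_unique_of_eventuallyEq (tendsto_setIntegral_mul_exp_neg hφb)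
      (tendsto_integral_mul_add_I_mul hφy (hφs.smul_left (f := fun t ↦ 𝐞 (t * y))) hg) ?_
    filter_upwards [self_mem_nhdsWithin] with ε hε
    rw [← setIntegral_fourier_mul_exp_eq (hφ.integrable_of_hasCompactSupport hφs) hb hbM hgb hε]
    simp only [mul_assoc]
  have hRL := (Real.zero_at_infty_fourier fun t : ℝ ↦
    φ t * g (2 * Real.pi * Complex.I * t)).comp
      (tendsto_neg_atTop_atBot.mono_right atBot_le_cocompact)
  refine hRL.congr fun y ↦ ?_
  rw [hboundary]
  simp [Real.fourier_real_eq, smul_mul_assoc]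

end Laplace

section Kernel

variable {K B : ℝ → ℝ} {A M : ℝ}

lemma tendsto_setIntegral_Ioi_comp_sub (hK : Integrable K) :
    Tendsto (fun y ↦ ∫ v in Set.Ioi (0 : ℝ), K (v - y)) atTop (𝓝 (∫ u, K u)) := by
  have h := (aecover_Ioi tendsto_neg_atTop_atBot).integral_tendsto_of_countably_generated hK
  refine h.congr fun y ↦ ?_
  rw [← (measurePreserving_sub_right volume y).setIntegral_preimage_emb
    (measurableEmbedding_subRight y) K]
  simp

lemma tendsto_integral_mul_comp_add {φ : ℝ → ℂ} (hφ : Continuous φ) (hφs : HasCompactSupport φ)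
    (hφK : ∀ v, 𝓕 φ v = K v) (hK : Integrable K) (hB : Measurable B) (hBM : ∀ v, |B v| ≤ M)
    (hBneg : ∀ v < 0, B v = 0) (hBL : LaplaceExtendsContinuously fun v ↦ ((B v - A : ℝ) : ℂ)) :
    Tendsto (fun y ↦ ∫ u, K u * B (y + u)) atTop (𝓝 (A * ∫ u, K u)) := by
  have hbm : Measurable fun v ↦ B v - A := hB.sub_const A
  have hbM (v : ℝ) : ‖B v - A‖ ≤ M + |A| := (norm_sub_le _ _).trans (add_le_add_left (hBM v) _)
  have hφi : Integrable (𝓕 φ) := by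
    rw [funext hφK]
    exact hK.ofReal
  have hdiff : Tendsto (fun y ↦ ∫ v in Set.Ioi (0 : ℝ), K (v - y) * (B v - A)) atTop (𝓝 0) := by
    have h := tendsto_setIntegral_fourier_comp_sub_mul hφ hφs hφi
      (Complex.measurable_ofReal.comp hbm).aestronglyMeasurable
      (fun v _ ↦ (Complex.norm_real _).trans_le (hbM v)) hBL
    simpa only [Function.comp_def, hφK, ← Complex.ofReal_mul, integral_complex_ofReal,
      Complex.ofReal_re, Complex.zero_re] using (Complex.continuous_re.tendsto 0).comp h
  have hadd := hdiff.add ((tendsto_setIntegral_Ioi_comp_sub hK).mul_const A)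
  rw [zero_add, mul_comm] at hadd
  refine hadd.congr fun y ↦ ?_
  have hKy : Integrable fun v ↦ K (v - y) := hK.comp_sub_right y
  have hKb : Integrable fun v ↦ K (v - y) * (B v - A) :=
    hKy.mul_bdd hbm.aestronglyMeasurable (.of_forall hbM)
  calc (∫ v in Set.Ioi (0 : ℝ), K (v - y) * (B v - A)) + (∫ v in Set.Ioi (0 : ℝ), K (v - y)) * A
      = ∫ v in Set.Ioi (0 : ℝ), K (v - y) * B v := by
        rw [← integral_mul_const, ← integral_add hKb.integrableOn (hKy.mul_const A).integrableOn]
        simp only [← mul_add, sub_add_cancel]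
    _ = ∫ v, K (v - y) * B v := by
        rw [← integral_Ici_eq_integral_Ioi]
        refine setIntegral_eq_integral_of_forall_compl_eq_zero fun v hv ↦ ?_
        rw [hBneg v (not_le.1 hv), mul_zero]
    _ = ∫ u, K u * B (y + u) := by
        simpa using integral_sub_right_eq_self (fun u ↦ K u * B (y + u)) y

lemma tendsto_integral_mul_comp_add_mul {φ : ℝ → ℂ} (hφ : Continuous φ)
    (hφs : HasCompactSupport φ) (hφK : ∀ v, 𝓕 φ v = K v) (hK : Integrable K) (hB : Measurable B)
    (hBM : ∀ v, |B v| ≤ M) (hBneg : ∀ v < 0, B v = 0)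
    (hBL : LaplaceExtendsContinuously fun v ↦ ((B v - A : ℝ) : ℂ)) {ε : ℝ} (hε : 0 < ε) :
    Tendsto (fun y ↦ ∫ u, K u * B (y + ε * u)) atTop (𝓝 (A * ∫ u, K u)) := by
  have hscaled := tendsto_integral_mul_comp_add (B := fun v ↦ B (ε * v)) hφ hφs hφK hK
    (hB.comp (measurable_const_mul ε)) (fun v ↦ hBM _)
    (fun v hv ↦ hBneg _ (mul_neg_of_pos_of_neg hε hv)) (hBL.comp_mul_left hε)
  refine (hscaled.comp (tendsto_id.atTop_div_const hε)).congr fun y ↦ ?_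
  simp [mul_add, mul_div_cancel₀ y hε.ne']

lemma integral_mul_le_of_le_on {f : ℝ → ℝ} {s : Set ℝ} {C : ℝ} (hs : MeasurableSet s)
    (hK : Integrable K) (hK0 : ∀ u, 0 ≤ K u) (hf : Integrable fun u ↦ K u * f u)
    (hC : ∀ u ∈ s, f u ≤ C) (hM : ∀ u, f u ≤ M) :
    ∫ u, K u * f u ≤ (∫ u in s, K u) * C + (∫ u in sᶜ, K u) * M := by
  rw [← integral_add_compl hs hf, ← integral_mul_const, ← integral_mul_const]
  exact add_le_add
    (setIntegral_mono_on hf.integrableOn (hK.mul_const C).integrableOn hs fun u hu ↦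
      mul_le_mul_of_nonneg_left (hC u hu) (hK0 u))
    (setIntegral_mono hf.integrableOn (hK.mul_const M).integrableOn fun u ↦
      mul_le_mul_of_nonneg_left (hM u) (hK0 u))

lemma tendsto_setIntegral_Icc_neg (hK : Integrable K) :
    Tendsto (fun R ↦ ∫ u in Set.Icc (-R) R, K u) atTop (𝓝 (∫ u, K u)) :=
  (aecover_Icc tendsto_neg_atTop_atBot tendsto_id).integral_tendsto_of_countably_generated hK

lemma le_exp_mul_of_monotone_exp_mul (hB : Monotone fun v ↦ Real.exp v * B v) (hB0 : ∀ v, 0 ≤ B v)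
    {v w d : ℝ} (hvw : v ≤ w) (hwv : w - v ≤ d) : B v ≤ Real.exp d * B w := calc
  B v = Real.exp (-v) * (Real.exp v * B v) := by
    rw [← mul_assoc, ← Real.exp_add, neg_add_cancel, Real.exp_zero, one_mul]
  _ ≤ Real.exp (-v) * (Real.exp w * B w) := mul_le_mul_of_nonneg_left (hB hvw) (Real.exp_pos _).le
  _ = Real.exp (w - v) * B w := by rw [← mul_assoc, ← Real.exp_add, neg_add_eq_sub]
  _ ≤ Real.exp d * B w := by gcongr; exact hB0 w

lemma exists_pos_mul_exp_lt {c A : ℝ} (hcA : c < A) : ∃ d > 0, c * Real.exp (2 * d) < A := by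
  have hcont : Continuous fun d : ℝ ↦ c * Real.exp (2 * d) := by fun_prop
  have hlt := (hcont.tendsto 0).eventually (gt_mem_nhds (by simpa using hcA))
  obtain ⟨d, hd, hdpos⟩ := ((hlt.filter_mono nhdsWithin_le_nhds).and
    (self_mem_nhdsWithin : Set.Ioi (0 : ℝ) ∈ 𝓝[>] 0)).exists
  exact ⟨d, hdpos, hd⟩

lemma div_mul_mem_Icc {d R u : ℝ} (hd : 0 < d) (hR : 0 < R) (hu : u ∈ Set.Icc (-R) R) :
    d / R * u ∈ Set.Icc (-d) d := by
  rw [Set.mem_Icc, ← abs_le] at hu ⊢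
  rw [abs_mul, abs_of_pos (div_pos hd hR), div_mul_eq_mul_div, div_le_iff₀ hR]
  gcongr

/-- Rescaled by `d / R`, the kernel `K` has almost all of its mass on `[-d, d]`; centred at `y - d`,
this window lies to the left of `y`, where `B` is at most `exp (2 * d) * B y`. -/
lemma eventually_const_lt_of_tendsto_integral (hK : Integrable K) (hK0 : ∀ u, 0 ≤ K u)
    (hKpos : 0 < ∫ u, K u) (hB : Monotone fun v ↦ Real.exp v * B v) (hB0 : ∀ v, 0 ≤ B v)
    (hBM : ∀ v, B v ≤ M) (hKB : ∀ ε y, Integrable fun u ↦ K u * B (y + ε * u))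
    (hlim : ∀ ε, 0 < ε → Tendsto (fun y ↦ ∫ u, K u * B (y + ε * u)) atTop (𝓝 (A * ∫ u, K u)))
    {c : ℝ} (hc : c < A) : ∀ᶠ y in atTop, c < B y := by
  obtain ⟨d, hd, hcd⟩ := exists_pos_mul_exp_lt hc
  have hmass := tendsto_setIntegral_Icc_neg hK
  have htail := (hmass.mul_const (c * Real.exp (2 * d))).add
    (((tendsto_const_nhds (x := ∫ u, K u)).sub hmass).mul_const M)
  rw [sub_self, zero_mul, add_zero] at htail
  have hcA : (∫ u, K u) * (c * Real.exp (2 * d)) < A * ∫ u, K u := by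
    rw [mul_comm A]
    gcongr
  obtain ⟨R, hRA, hR⟩ := ((htail.eventually (gt_mem_nhds hcA)).and
    (eventually_gt_atTop 0)).exists
  have hshift := (hlim (d / R) (div_pos hd hR)).comp (tendsto_atTop_add_const_right _ (-d)
    tendsto_id)
  filter_upwards [hshift.eventually (lt_mem_nhds hRA)] with y hy
  have hupper : ∫ u, K u * B (y + -d + d / R * u) ≤
      (∫ u in Set.Icc (-R) R, K u) * (Real.exp (2 * d) * B y) +
        (∫ u in (Set.Icc (-R) R)ᶜ, K u) * M := by
    refine integral_mul_le_of_le_on measurableSet_Icc hK hK0 (hKB _ _) (fun u hu ↦ ?_)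
      fun u ↦ hBM _
    obtain ⟨hul, hur⟩ := div_mul_mem_Icc hd hR hu
    exact le_exp_mul_of_monotone_exp_mul hB hB0 (by linarith) (by linarith)
  rw [setIntegral_compl measurableSet_Icc hK] at hupper
  refine lt_of_mul_lt_mul_left (a := (∫ u in Set.Icc (-R) R, K u) * Real.exp (2 * d)) ?_
    (mul_nonneg (integral_nonneg hK0) (Real.exp_pos _).le)
  simp only [Function.comp_def, id] at hy
  linarith

lemma eventually_lt_const_of_tendsto_integral (hK : Integrable K) (hK0 : ∀ u, 0 ≤ K u)
    (hKpos : 0 < ∫ u, K u) (hB : Monotone fun v ↦ Real.exp v * B v) (hB0 : ∀ v, 0 ≤ B v)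
    (hKB : ∀ ε y, Integrable fun u ↦ K u * B (y + ε * u))
    (hlim : ∀ ε, 0 < ε → Tendsto (fun y ↦ ∫ u, K u * B (y + ε * u)) atTop (𝓝 (A * ∫ u, K u)))
    {c : ℝ} (hc : A < c) : ∀ᶠ y in atTop, B y < c := by
  obtain ⟨d, hd, hAd⟩ := exists_pos_mul_exp_lt hc
  have hmass := (tendsto_setIntegral_Icc_neg hK).mul_const (c * Real.exp (-(2 * d)))
  have hAc : A * ∫ u, K u < (∫ u, K u) * (c * Real.exp (-(2 * d))) := by
    rw [mul_comm, Real.exp_neg, ← div_eq_mul_inv]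
    gcongr
    rwa [lt_div_iff₀ (Real.exp_pos _)]
  obtain ⟨R, hRA, hR⟩ := ((hmass.eventually (lt_mem_nhds hAc)).and
    (eventually_gt_atTop 0)).exists
  have hshift := (hlim (d / R) (div_pos hd hR)).comp (tendsto_atTop_add_const_right _ d
    tendsto_id)
  filter_upwards [hshift.eventually (gt_mem_nhds hRA)] with y hy
  have hlower : ∫ u, K u * -B (y + d + d / R * u) ≤
      (∫ u in Set.Icc (-R) R, K u) * -(Real.exp (-(2 * d)) * B y) +
        (∫ u in (Set.Icc (-R) R)ᶜ, K u) * 0 := by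
    refine integral_mul_le_of_le_on measurableSet_Icc hK hK0
      (by simp only [mul_neg]; exact (hKB _ _).neg) (fun u hu ↦ ?_) fun u ↦ neg_nonpos.2 (hB0 _)
    obtain ⟨hul, hur⟩ := div_mul_mem_Icc hd hR hu
    rw [neg_le_neg_iff, Real.exp_neg, inv_mul_le_iff₀ (Real.exp_pos _)]
    exact le_exp_mul_of_monotone_exp_mul hB hB0 (by linarith) (by linarith)
  simp only [mul_neg, integral_neg, mul_zero, add_zero, neg_le_neg_iff] at hlower
  refine lt_of_mul_lt_mul_left (a := (∫ u in Set.Icc (-R) R, K u) * Real.exp (-(2 * d))) ?_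
    (mul_nonneg (integral_nonneg hK0) (Real.exp_pos _).le)
  simp only [Function.comp_def, id] at hy
  linarith

end Kernel

theorem tendsto_of_laplaceExtendsContinuously {B : ℝ → ℝ} {A M : ℝ}
    (hB : Monotone fun v ↦ Real.exp v * B v) (hB0 : ∀ v, 0 ≤ B v) (hBM : ∀ v, B v ≤ M)
    (hBneg : ∀ v < 0, B v = 0)
    (hBL : LaplaceExtendsContinuously fun v ↦ ((B v - A : ℝ) : ℂ)) :
    Tendsto B atTop (𝓝 A) := by
  obtain ⟨φ, K, hφ, hφs, hφK, hK0, hK, hKpos⟩ := exists_hasCompactSupport_fourier_nonneg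
  have hBabs (v : ℝ) : |B v| ≤ M := (abs_of_nonneg (hB0 v)).trans_le (hBM v)
  have hBm : Measurable B := by
    have h : B = fun v ↦ Real.exp (-v) * (Real.exp v * B v) := by
      ext v
      rw [← mul_assoc, ← Real.exp_add, neg_add_cancel, Real.exp_zero, one_mul]
    rw [h]
    exact Real.continuous_exp.measurable.comp measurable_neg |>.mul hB.measurable
  have hKB (ε y : ℝ) : Integrable fun u ↦ K u * B (y + ε * u) :=
    hK.mul_bdd (hBm.comp (by fun_prop)).aestronglyMeasurable (.of_forall fun u ↦ hBabs _)
  have hlim (ε : ℝ) (hε : 0 < ε) :=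
    tendsto_integral_mul_comp_add_mul hφ hφs hφK hK hBm hBabs hBneg hBL hε
  exact tendsto_order.2
    ⟨fun c ↦ eventually_const_lt_of_tendsto_integral hK hK0 hKpos hB hB0 hBM hKB hlim,
      fun c ↦ eventually_lt_const_of_tendsto_integral hK hK0 hKpos hB hB0 hKB hlim⟩

end Tauberian

section WienerIkehara

open MeasureTheory Topology

variable {f : ℕ → ℝ} {A M : ℝ}

lemma LSeries_eq_mul_integral_exp (hf : ∀ n, 0 ≤ f n)
    (hfM : ∀ n : ℕ, ∑ k ∈ Finset.Icc 1 n, f k ≤ M * n) {s : ℂ} (hs : 0 < s.re) :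
    LSeries (fun n ↦ (f n : ℂ)) (s + 1) =
      (s + 1) * ∫ v in Set.Ioi (0 : ℝ),
        (((∑ k ∈ Finset.Icc 1 ⌊Real.exp v⌋₊, f k) / Real.exp v : ℝ) : ℂ) *
          Complex.exp (-(s * v)) := by
  have hO : (fun n : ℕ ↦ ∑ k ∈ Finset.Icc 1 n, f k) =O[atTop] fun n ↦ (n : ℝ) ^ (1 : ℝ) := by
    refine IsBigO.of_bound M (.of_forall fun n ↦ ?_)
    simpa [abs_of_nonneg (Finset.sum_nonneg fun k _ ↦ hf k)] using hfM n
  have hsubst := integral_image_eq_integral_deriv_smul_of_monotoneOn (s := Set.Ioi (0 : ℝ))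
    measurableSet_Ioi (fun v _ ↦ (Real.hasDerivAt_exp v).hasDerivWithinAt)
    (Real.exp_monotone.monotoneOn _)
    (fun t : ℝ ↦ (∑ k ∈ Finset.Icc 1 ⌊t⌋₊, (f k : ℂ)) * (t : ℂ) ^ (-(s + 1 + 1)))
  rw [Real.image_exp_Ioi, Real.exp_zero] at hsubst
  rw [LSeries_eq_mul_integral_of_nonneg f zero_le_one (by simpa using hs) hO hf, hsubst]
  congr 1
  refine integral_congr_ae (.of_forall fun v ↦ ?_)
  have hpow : (Real.exp v : ℂ) ^ (-(s + 1 + 1)) =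
      Complex.exp (-v) * Complex.exp (-v) * Complex.exp (-(s * v)) := by
    rw [Complex.cpow_def_of_ne_zero (Complex.ofReal_ne_zero.2 (Real.exp_pos v).ne'),
      ← Complex.ofReal_log (Real.exp_pos v).le, Real.log_exp, ← Complex.exp_add,
      ← Complex.exp_add]
    ring_nf
  simp only [hpow, Complex.real_smul, Complex.ofReal_div, Complex.ofReal_sum]
  rw [← Complex.ofReal_neg, ← Complex.ofReal_exp, Real.exp_neg, Complex.ofReal_inv]
  have hv : (Real.exp v : ℂ) ≠ 0 := Complex.ofReal_ne_zero.2 (Real.exp_pos v).ne'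
  field_simp

lemma sum_Icc_floor_div_mem_Icc (hf : ∀ n, 0 ≤ f n)
    (hfM : ∀ n : ℕ, ∑ k ∈ Finset.Icc 1 n, f k ≤ M * n) {x : ℝ} (hx : 0 < x) :
    (∑ k ∈ Finset.Icc 1 ⌊x⌋₊, f k) / x ∈ Set.Icc 0 M := by
  have hM : 0 ≤ M := (hf 1).trans (by simpa using hfM 1)
  refine ⟨div_nonneg (Finset.sum_nonneg fun k _ ↦ hf k) hx.le, (div_le_iff₀ hx).2 ?_⟩
  exact (hfM _).trans (mul_le_mul_of_nonneg_left (Nat.floor_le hx.le) hM)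

lemma laplaceExtendsContinuously_sum_exp_div (hf : ∀ n, 0 ≤ f n)
    (hfM : ∀ n : ℕ, ∑ k ∈ Finset.Icc 1 n, f k ≤ M * n) {G : ℂ → ℂ}
    (hG : ContinuousOn G {s | 1 ≤ s.re})
    (hGf : ∀ s : ℂ, 1 < s.re → G s = LSeries (fun n ↦ (f n : ℂ)) s - A / (s - 1)) :
    LaplaceExtendsContinuously fun v ↦
      (((∑ k ∈ Finset.Icc 1 ⌊Real.exp v⌋₊, f k) / Real.exp v - A : ℝ) : ℂ) := by
  have hne {s : ℂ} (hs : 0 ≤ s.re) : s + 1 ≠ 0 := fun h ↦ by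
    have hre := congrArg Complex.re h
    simp only [Complex.add_re, Complex.one_re, Complex.zero_re] at hre
    linarith
  refine ⟨fun s ↦ (G (s + 1) - A) / (s + 1), ?_, fun s hs ↦ ?_⟩
  · have hGs : ContinuousOn (fun s ↦ G (s + 1)) {s | 0 ≤ s.re} :=
      hG.comp (by fun_prop) fun s hs ↦ by simpa using hs
    exact (hGs.sub continuousOn_const).div (by fun_prop) fun s hs ↦ hne hs
  · have hexp : IntegrableOn (fun v : ℝ ↦ Complex.exp (-(s * v))) (Set.Ioi 0) := by
      simpa only [neg_mul] using integrableOn_exp_mul_complex_Ioi (a := -s) (by simpa using hs) 0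
    have hexp_int : ∫ v in Set.Ioi (0 : ℝ), Complex.exp (-(s * v)) = 1 / s := by
      simpa [neg_mul] using integral_exp_mul_complex_Ioi (a := -s) (by simpa using hs) 0
    have hmeas : Measurable fun v ↦ (∑ k ∈ Finset.Icc 1 ⌊Real.exp v⌋₊, f k) / Real.exp v :=
      ((measurable_from_nat (f := fun n ↦ ∑ k ∈ Finset.Icc 1 n, f k)).comp
        (Nat.measurable_floor.comp Real.measurable_exp)).div Real.measurable_exp
    have hbdd (v : ℝ) : ‖(((∑ k ∈ Finset.Icc 1 ⌊Real.exp v⌋₊, f k) / Real.exp v : ℝ) : ℂ)‖ ≤ M := by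
      have hmem := sum_Icc_floor_div_mem_Icc hf hfM (Real.exp_pos v)
      rw [Complex.norm_real, Real.norm_eq_abs, abs_of_nonneg hmem.1]
      exact hmem.2
    have hs0 : s ≠ 0 := fun h ↦ by simp [h] at hs
    have hs1 := hne hs.le
    simp only [Complex.ofReal_sub, sub_mul]
    rw [integral_sub (hexp.bdd_mul hmeas.complex_ofReal.aestronglyMeasurable (.of_forall hbdd))
      (hexp.const_mul _), integral_const_mul, hexp_int, hGf _ (by simpa using hs),
      LSeries_eq_mul_integral_exp hf hfM hs, add_sub_cancel_right]
    field_simp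
    ring

theorem tendsto_sum_div_of_continuousOn_LSeries_sub (hf : ∀ n, 0 ≤ f n)
    (hfM : ∀ n : ℕ, ∑ k ∈ Finset.Icc 1 n, f k ≤ M * n) {G : ℂ → ℂ}
    (hG : ContinuousOn G {s | 1 ≤ s.re})
    (hGf : ∀ s : ℂ, 1 < s.re → G s = LSeries (fun n ↦ (f n : ℂ)) s - A / (s - 1)) :
    Tendsto (fun x : ℝ ↦ (∑ k ∈ Finset.Icc 1 ⌊x⌋₊, f k) / x) atTop (𝓝 A) := by
  have hmono : Monotone fun v ↦ ∑ k ∈ Finset.Icc 1 ⌊Real.exp v⌋₊, f k := fun v w hvw ↦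
    Finset.sum_le_sum_of_subset_of_nonneg (Finset.Icc_subset_Icc_right
      (Nat.floor_mono (Real.exp_le_exp.2 hvw))) fun k _ _ ↦ hf k
  have hexp : Tendsto (fun v ↦ (∑ k ∈ Finset.Icc 1 ⌊Real.exp v⌋₊, f k) / Real.exp v) atTop
      (𝓝 A) := by
    refine tendsto_of_laplaceExtendsContinuously (M := M) ?_ (fun v ↦ ?_) (fun v ↦ ?_)
      (fun v hv ↦ ?_) (laplaceExtendsContinuously_sum_exp_div hf hfM hG hGf)
    · simpa only [mul_div_cancel₀ _ (Real.exp_pos _).ne'] using hmono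
    · exact (sum_Icc_floor_div_mem_Icc hf hfM (Real.exp_pos v)).1
    · exact (sum_Icc_floor_div_mem_Icc hf hfM (Real.exp_pos v)).2
    · rw [Nat.floor_eq_zero.2 (Real.exp_lt_one_iff.2 hv)]
      simp
  refine (hexp.comp Real.tendsto_log_atTop).congr' ?_
  filter_upwards [eventually_gt_atTop 0] with x hx
  simp only [Function.comp_apply, Real.exp_log hx]

end WienerIkehara

section PrimesInAP

open Topology ArithmeticFunction

lemma tendsto_sum_residueClass_div {N : ℕ} [NeZero N] {a : ZMod N} (ha : IsUnit a) :
    Tendsto (fun x : ℝ ↦ (∑ n ∈ Finset.Icc 1 ⌊x⌋₊, vonMangoldt.residueClass a n) / x) atTop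
      (𝓝 (N.totient : ℝ)⁻¹) := by
  refine tendsto_sum_div_of_continuousOn_LSeries_sub (M := Real.log 4 + 4)
    (vonMangoldt.residueClass_nonneg a) (fun n ↦ ?_)
    (vonMangoldt.continuousOn_LFunctionResidueClassAux a) fun s hs ↦ ?_
  · refine (Finset.sum_le_sum fun k _ ↦ vonMangoldt.residueClass_le a k).trans ?_
    simpa [Chebyshev.psi, ← Finset.Icc_add_one_left_eq_Ioc] using
      Chebyshev.psi_le_const_mul_self (Nat.cast_nonneg n)
  · simpa using vonMangoldt.eqOn_LFunctionResidueClassAux ha hs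

lemma sum_abs_prime_log_sub_vonMangoldt {x : ℝ} (hx : 0 ≤ x) :
    ∑ n ∈ Finset.Ioc 0 ⌊x⌋₊, |(if n.Prime then Real.log x else 0) - vonMangoldt n| =
      (Nat.primeCounting ⌊x⌋₊ * Real.log x - Chebyshev.theta x) +
        (Chebyshev.psi x - Chebyshev.theta x) := by
  have hcount : (Nat.primeCounting ⌊x⌋₊ : ℝ) * Real.log x =
      ∑ n ∈ Finset.Ioc 0 ⌊x⌋₊ with n.Prime, Real.log x := by
    rw [Finset.sum_const, nsmul_eq_mul, ← Nat.primesLE_eq_filter_Ioc_zero,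
      Nat.primesLE_card_eq_primeCounting]
  rw [hcount, Chebyshev.psi_sub_theta_eq_sum_not_prime, Chebyshev.theta,
    ← Finset.sum_sub_distrib, Finset.sum_filter, Finset.sum_filter, ← Finset.sum_add_distrib]
  refine Finset.sum_congr rfl fun n hn ↦ ?_
  rw [Finset.mem_Ioc, Nat.le_floor_iff hx] at hn
  by_cases hp : n.Prime
  · have hlog : Real.log n ≤ Real.log x := Real.log_le_log (Nat.cast_pos.2 hn.1) hn.2
    simp [hp, vonMangoldt_apply_prime hp, abs_of_nonneg (sub_nonneg.2 hlog)]
  · simp [hp, abs_of_nonneg vonMangoldt_nonneg]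

lemma isLittleO_sum_abs_prime_log_sub_vonMangoldt :
    (fun x : ℝ ↦ ∑ n ∈ Finset.Ioc 0 ⌊x⌋₊, |(if n.Prime then Real.log x else 0) - vonMangoldt n|)
      =o[atTop] (fun x : ℝ ↦ x) := by
  have hpi : (fun x : ℝ ↦ Nat.primeCounting ⌊x⌋₊ * Real.log x - Chebyshev.theta x) =o[atTop]
      (fun x : ℝ ↦ x) := by
    have hinv : (fun x : ℝ ↦ (Real.log x)⁻¹) =o[atTop] fun _ ↦ (1 : ℝ) :=
      (isLittleO_one_iff ℝ).2 Real.tendsto_log_atTop.inv_tendsto_atTop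
    have hdiv : (fun x : ℝ ↦ x / Real.log x ^ 2 * Real.log x) =o[atTop] (fun x : ℝ ↦ x) := by
      refine ((isBigO_refl (fun x : ℝ ↦ x) atTop).mul_isLittleO hinv).congr' ?_ (by simp)
      filter_upwards [eventually_gt_atTop 1] with x hx
      field_simp
    refine ((Chebyshev.primeCounting_sub_theta_div_log_isBigO.mul
      (isBigO_refl Real.log atTop)).trans_isLittleO hdiv).congr' ?_ .rfl
    filter_upwards [eventually_gt_atTop 1] with x hx
    rw [sub_mul, div_mul_cancel₀ _ (Real.log_pos hx).ne']
  have hpsi : (Chebyshev.psi - Chebyshev.theta) =o[atTop] (fun x : ℝ ↦ x) := by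
    refine Chebyshev.isBigO_psi_sub_theta_sqrt.trans_isLittleO (isLittleO_of_tendsto' ?_ ?_)
    · filter_upwards [eventually_gt_atTop 0] with x hx h using absurd h hx.ne'
    · simp only [Real.sqrt_div_self', one_div]
      exact Real.tendsto_sqrt_atTop.inv_tendsto_atTop
  refine (hpi.add hpsi).congr' ?_ .rfl
  filter_upwards [eventually_ge_atTop 0] with x hx
  exact (sum_abs_prime_log_sub_vonMangoldt hx).symm

/-- `S` is a set of positive integers whose counting function is asymptotic to `α * x / log x`;
for a set of primes, `α` is its relative natural density among the primes. -/
structure HasPrimeDensity (S : Set ℕ) (α : ℝ) : Prop where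
  zero_notMem : 0 ∉ S
  tendsto_count : Tendsto (fun x : ℝ ↦ Nat.count (· ∈ S) (⌊x⌋₊ + 1) * Real.log x / x) atTop (𝓝 α)

/-- The primes in the residue class `a` modulo `N`. -/
def primesInClass {N : ℕ} (a : ZMod N) : Set ℕ :=
  {p | p.Prime ∧ (p : ZMod N) = a}

lemma abs_count_mul_log_sub_sum_residueClass_le {N : ℕ} (a : ZMod N) (x : ℝ) :
    |Nat.count (· ∈ primesInClass a) (⌊x⌋₊ + 1) * Real.log x -
        ∑ n ∈ Finset.Icc 1 ⌊x⌋₊, vonMangoldt.residueClass a n| ≤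
      ∑ n ∈ Finset.Ioc 0 ⌊x⌋₊, |(if n.Prime then Real.log x else 0) - vonMangoldt n| := by
  have hcount : Nat.count (· ∈ primesInClass a) (⌊x⌋₊ + 1) * Real.log x =
      ∑ n ∈ Finset.Ioc 0 ⌊x⌋₊, if n.Prime ∧ (n : ZMod N) = a then Real.log x else 0 := by
    rw [Nat.count_eq_card_filter_range, ← nsmul_eq_mul, ← Finset.sum_const, ← Finset.sum_filter]
    congr 1
    ext n
    have hpos : n.Prime → 0 < n := Nat.Prime.pos
    simp only [primesInClass, Set.mem_ofPred_eq, Finset.mem_filter, Finset.mem_Ioc]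
    grind
  rw [hcount, ← zero_add 1, Finset.Icc_add_one_left_eq_Ioc, ← Finset.sum_sub_distrib]
  refine (Finset.abs_sum_le_sum_abs _ _).trans (Finset.sum_le_sum fun n _ ↦ ?_)
  by_cases hn : (n : ZMod N) = a <;> simp [vonMangoldt.residueClass, hn]

theorem hasPrimeDensity_primesInClass {N : ℕ} [NeZero N] {a : ZMod N} (ha : IsUnit a) :
    HasPrimeDensity (primesInClass a) (N.totient : ℝ)⁻¹ where
  zero_notMem h := Nat.not_prime_zero h.1
  tendsto_count := by
    refine tendsto_of_tendsto_of_dist (tendsto_sum_residueClass_div ha)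
      (squeeze_zero' (.of_forall fun _ ↦ dist_nonneg) ?_
        isLittleO_sum_abs_prime_log_sub_vonMangoldt.tendsto_div_nhds_zero)
    filter_upwards [eventually_gt_atTop 0] with x hx
    rw [dist_comm, Real.dist_eq, ← sub_div, abs_div, abs_of_pos hx]
    gcongr
    exact abs_count_mul_log_sub_sum_residueClass_le a x

end PrimesInAP

section Stolz

open Topology

lemma tendsto_sum_div_sum_of_isLittleO {f g : ℕ → ℝ} {c : ℝ} (hg : ∀ n, 0 ≤ g n)
    (hG : Tendsto (fun n ↦ ∑ i ∈ Finset.range n, g i) atTop atTop)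
    (hfg : (fun n ↦ f n - c * g n) =o[atTop] g) :
    Tendsto (fun n ↦ (∑ i ∈ Finset.range n, f i) / ∑ i ∈ Finset.range n, g i) atTop (𝓝 c) := by
  have hsum := ((hfg.sum_range hg hG).tendsto_div_nhds_zero).add_const c
  rw [zero_add] at hsum
  refine hsum.congr' ?_
  filter_upwards [hG.eventually_gt_atTop 0] with n hn
  rw [Finset.sum_sub_distrib, ← Finset.mul_sum, sub_div, mul_div_cancel_right₀ _ hn.ne',
    sub_add_cancel]

lemma tendsto_div_succ_of_sub_le {U : ℕ → ℝ} {M : ℝ} (hU : Tendsto U atTop atTop)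
    (hmono : Monotone U) (hM : ∀ n, U (n + 1) - U n ≤ M) :
    Tendsto (fun n ↦ U n / U (n + 1)) atTop (𝓝 1) := by
  have hU1 := hU.comp (tendsto_add_atTop_nat 1)
  have hsmall : Tendsto (fun n ↦ (U (n + 1) - U n) / U (n + 1)) atTop (𝓝 0) := by
    refine squeeze_zero' ?_ ?_ (hU1.const_div_atTop M)
    · filter_upwards [hU1.eventually_ge_atTop 0] with n hn
      exact div_nonneg (sub_nonneg.2 (hmono n.le_succ)) hn
    · filter_upwards [hU1.eventually_ge_atTop 0] with n hn
      exact div_le_div_of_nonneg_right (hM n) hn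
  rw [← sub_zero (1 : ℝ)]
  refine (hsmall.const_sub 1).congr' ?_
  filter_upwards [hU1.eventually_ne_atTop 0] with n (hn : U (n + 1) ≠ 0)
  rw [one_sub_div hn, sub_sub_cancel]

lemma pow_succ_sub_pow_succ_eq {a b : ℝ} (hb : b ≠ 0) (r : ℕ) :
    b ^ (r + 1) - a ^ (r + 1) =
      (b - a) * b ^ r * ∑ i ∈ Finset.range (r + 1), (a / b) ^ i := by
  calc b ^ (r + 1) - a ^ (r + 1)
      = b ^ (r + 1) * (1 - (a / b) ^ (r + 1)) := by
        rw [mul_sub, mul_one, ← mul_pow, mul_div_cancel₀ _ hb]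
    _ = (b * (1 - a / b)) * b ^ r * ∑ i ∈ Finset.range (r + 1), (a / b) ^ i := by
        rw [← mul_neg_geom_sum]
        ring
    _ = (b - a) * b ^ r * ∑ i ∈ Finset.range (r + 1), (a / b) ^ i := by
        rw [mul_one_sub, mul_div_cancel₀ _ hb]

lemma isLittleO_sub_pow_succ_sub_pow_succ {U v : ℕ → ℝ} {β : ℝ} {r : ℕ}
    (hU : ∀ᶠ n in atTop, U (n + 1) ≠ 0) (hratio : Tendsto (fun n ↦ U n / U (n + 1)) atTop (𝓝 1))
    (hv : Tendsto (fun n ↦ v n / U (n + 1) ^ r) atTop (𝓝 β)) :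
    (fun n ↦ (U (n + 1) - U n) * v n - β / (r + 1) * (U (n + 1) ^ (r + 1) - U n ^ (r + 1)))
      =o[atTop] fun n ↦ U (n + 1) ^ (r + 1) - U n ^ (r + 1) := by
  set q : ℕ → ℝ := fun n ↦ ∑ i ∈ Finset.range (r + 1), (U n / U (n + 1)) ^ i
  have hq : Tendsto q atTop (𝓝 (r + 1)) := by
    simpa using tendsto_finsetSum (Finset.range (r + 1)) fun i _ ↦ hratio.pow i
  have hr : (r + 1 : ℝ) ≠ 0 := Nat.cast_add_one_ne_zero r
  have hlittle : (fun n ↦ v n / U (n + 1) ^ r - β / (r + 1) * q n) =o[atTop] q := by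
    have hzero := (hv.sub (hq.const_mul (β / (r + 1)))).div hq hr
    rw [div_mul_cancel₀ _ hr, sub_self, zero_div] at hzero
    exact isLittleO_of_tendsto' ((hq.eventually_ne hr).mono fun n hn h ↦ absurd h hn) hzero
  refine ((isBigO_refl (fun n ↦ (U (n + 1) - U n) * U (n + 1) ^ r) atTop).mul_isLittleO
    hlittle).congr' ?_ ?_
  · filter_upwards [hU] with n hn
    have hpow : U (n + 1) ^ r * (v n / U (n + 1) ^ r) = v n := mul_div_cancel₀ _ (pow_ne_zero r hn)
    rw [pow_succ_sub_pow_succ_eq hn, mul_sub, mul_assoc, hpow]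
    ring
  · filter_upwards [hU] with n hn using (pow_succ_sub_pow_succ_eq hn r).symm

lemma tendsto_sum_mul_div_pow {u v : ℕ → ℝ} {β M : ℝ} {r : ℕ} (hu : ∀ n, 0 ≤ u n)
    (huM : ∀ n, u n ≤ M) (hU : Tendsto (fun n ↦ ∑ i ∈ Finset.range n, u i) atTop atTop)
    (hv : Tendsto (fun n ↦ v n / (∑ i ∈ Finset.range (n + 1), u i) ^ r) atTop (𝓝 β)) :
    Tendsto (fun n ↦ (∑ i ∈ Finset.range n, u i * v i) / (∑ i ∈ Finset.range n, u i) ^ (r + 1))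
      atTop (𝓝 (β / (r + 1))) := by
  set U : ℕ → ℝ := fun n ↦ ∑ i ∈ Finset.range n, u i
  have hsub (n : ℕ) : U (n + 1) - U n = u n := Finset.sum_range_succ_sub_sum u
  have hmono : Monotone U := monotone_nat_of_le_succ fun n ↦ by
    rw [← sub_nonneg, hsub]
    exact hu n
  have hU0 (n : ℕ) : 0 ≤ U n := Finset.sum_nonneg fun i _ ↦ hu i
  have htel (n : ℕ) : ∑ i ∈ Finset.range n, (U (i + 1) ^ (r + 1) - U i ^ (r + 1)) =
      U n ^ (r + 1) := by
    simp [Finset.sum_range_sub (fun i ↦ U i ^ (r + 1)), U]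
  have hlittle := isLittleO_sub_pow_succ_sub_pow_succ
    ((hU.comp (tendsto_add_atTop_nat 1)).eventually_ne_atTop 0)
    (tendsto_div_succ_of_sub_le hU hmono fun n ↦ (hsub n).trans_le (huM n)) hv
  simp only [hsub] at hlittle
  have hstolz := tendsto_sum_div_sum_of_isLittleO
    (fun n ↦ sub_nonneg.2 (pow_le_pow_left₀ (hU0 n) (hmono n.le_succ) _)) ?_ hlittle
  · simpa only [htel] using hstolz
  · simp only [htel]
    exact (tendsto_pow_atTop r.succ_ne_zero).comp hU

end Stolz

section Mertens

open Topology

lemma log_sub_log_le {a b : ℝ} (ha : 0 < a) (hb : 0 < b) :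
    Real.log b - Real.log a ≤ (b - a) / a := by
  rw [← Real.log_div hb.ne' ha.ne', sub_div, div_self ha.ne']
  exact Real.log_le_sub_one_of_pos (div_pos hb ha)

lemma log_log_add_one_sub_le {x : ℝ} (hx : 1 < x) :
    Real.log (Real.log (x + 1)) - Real.log (Real.log x) ≤ (x * Real.log x)⁻¹ := by
  have hlog : 0 < Real.log x := Real.log_pos hx
  calc Real.log (Real.log (x + 1)) - Real.log (Real.log x)
      ≤ (Real.log (x + 1) - Real.log x) / Real.log x :=
        log_sub_log_le hlog (Real.log_pos (by linarith))
    _ ≤ ((x + 1 - x) / x) / Real.log x := by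
        gcongr
        exact log_sub_log_le (by linarith) (by linarith)
    _ = (x * Real.log x)⁻¹ := by rw [add_sub_cancel_left, div_div, one_div]

lemma inv_mul_log_add_one_le {x : ℝ} (hx : 1 < x) :
    ((x + 1) * Real.log (x + 1))⁻¹ ≤ Real.log (Real.log (x + 1)) - Real.log (Real.log x) := by
  have hlog : 0 < Real.log (x + 1) := Real.log_pos (by linarith)
  have h1 := log_sub_log_le (a := x + 1) (b := x) (by linarith) (by linarith)
  have h2 := log_sub_log_le hlog (Real.log_pos hx)
  have h3 : (Real.log x - Real.log (x + 1)) / Real.log (x + 1) ≤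
      ((x - (x + 1)) / (x + 1)) / Real.log (x + 1) := by gcongr
  have h4 : ((x - (x + 1)) / (x + 1)) / Real.log (x + 1) = -((x + 1) * Real.log (x + 1))⁻¹ := by
    rw [sub_add_cancel_left, div_div, neg_div, one_div]
  linarith

lemma tendsto_log_log_natCast : Tendsto (fun n : ℕ ↦ Real.log (Real.log n)) atTop atTop :=
  Real.tendsto_log_atTop.comp (Real.tendsto_log_atTop.comp tendsto_natCast_atTop_atTop)

lemma isBigO_sum_inv_mul_log_sub_log_log :
    (fun n : ℕ ↦ ∑ j ∈ Finset.range (n + 1), (j * Real.log j : ℝ)⁻¹ - Real.log (Real.log n))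
      =O[atTop] fun _ ↦ (1 : ℝ) := by
  set D : ℕ → ℝ := fun n ↦
    ∑ j ∈ Finset.range (n + 1), (j * Real.log j : ℝ)⁻¹ - Real.log (Real.log n)
  have hanti (n : ℕ) (hn : 2 ≤ n) : D n ≤ D 2 := by
    induction n, hn using Nat.le_induction with
    | base => rfl
    | succ n hn ih =>
      have hstep := inv_mul_log_add_one_le (x := n) (by exact_mod_cast hn)
      simp only [D, Finset.sum_range_succ _ (n + 1), Nat.cast_add_one] at ih ⊢
      linarith
  have hmono (n : ℕ) (hn : 2 ≤ n) :
      D 2 - (2 * Real.log 2)⁻¹ ≤ D n - (n * Real.log n : ℝ)⁻¹ := by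
    induction n, hn using Nat.le_induction with
    | base => simp
    | succ n hn ih =>
      have hstep := log_log_add_one_sub_le (x := n) (by exact_mod_cast hn)
      simp only [D, Finset.sum_range_succ _ (n + 1), Nat.cast_add_one] at ih ⊢
      linarith
  refine IsBigO.of_bound (|D 2| + (2 * Real.log 2)⁻¹) ?_
  filter_upwards [eventually_ge_atTop 2] with n hn
  have hpos : 0 ≤ (n * Real.log n : ℝ)⁻¹ := by positivity
  have h2 : 0 ≤ (2 * Real.log 2)⁻¹ := by positivity
  rw [norm_one, mul_one, Real.norm_eq_abs, abs_le]
  constructor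
  · linarith [hmono n hn, neg_abs_le (D 2)]
  · linarith [hanti n hn, le_abs_self (D 2)]

lemma tendsto_sum_inv_mul_log_div_log_log :
    Tendsto (fun n : ℕ ↦ (∑ j ∈ Finset.range (n + 1), (j * Real.log j : ℝ)⁻¹) /
      Real.log (Real.log n)) atTop (𝓝 1) := by
  have hlittle := isBigO_sum_inv_mul_log_sub_log_log.trans_isLittleO
    ((isLittleO_const_left (c := (1 : ℝ))).2
      (.inr (tendsto_norm_atTop_atTop.comp tendsto_log_log_natCast)))
  refine (isEquivalent_iff_tendsto_one ?_).1 hlittle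
  exact tendsto_log_log_natCast.eventually_ne_atTop 0

/-- The weights `1 / n` supported on `S`. -/
noncomputable def reciprocalOn (S : Set ℕ) : ℕ → ℝ :=
  S.indicator fun n ↦ (n : ℝ)⁻¹

lemma reciprocalOn_nonneg (S : Set ℕ) (n : ℕ) : 0 ≤ reciprocalOn S n :=
  Set.indicator_nonneg (fun n _ ↦ by positivity) n

lemma reciprocalOn_le_one (S : Set ℕ) (n : ℕ) : reciprocalOn S n ≤ 1 :=
  (Set.indicator_le_self' (fun _ _ ↦ by positivity) n).trans (Nat.cast_inv_le_one n)

variable {S : Set ℕ} {α : ℝ}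

lemma sum_reciprocalOn_eq (h0 : 0 ∉ S) (n : ℕ) :
    ∑ j ∈ Finset.range (n + 1), reciprocalOn S j =
      Nat.count (· ∈ S) (n + 1) / (n + 1) +
        ∑ j ∈ Finset.range (n + 1), (Nat.count (· ∈ S) (j + 1) / (j * (j + 1)) : ℝ) := by
  induction n with
  | zero => simp [reciprocalOn, h0, Nat.count_succ]
  | succ n ih =>
    rw [Finset.sum_range_succ, ih, Finset.sum_range_succ _ (n + 1), Nat.count_succ _ (n + 1)]
    by_cases hn : n + 1 ∈ S
    · simp only [hn, reciprocalOn, Set.indicator_of_mem, if_true]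
      push_cast
      field_simp
      ring
    · simp only [hn, reciprocalOn, Set.indicator_of_notMem, not_false_eq_true, if_false]
      push_cast
      field_simp
      ring

lemma HasPrimeDensity.isLittleO_count_div_sub (hS : HasPrimeDensity S α) :
    (fun n : ℕ ↦ (Nat.count (· ∈ S) (n + 1) / (n * (n + 1)) : ℝ) - α * (n * Real.log n : ℝ)⁻¹)
      =o[atTop] fun n : ℕ ↦ (n * Real.log n : ℝ)⁻¹ := by
  have hcount := (hS.tendsto_count.comp tendsto_natCast_atTop_atTop).mul
    (tendsto_natCast_div_add_atTop (1 : ℝ))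
  have hzero := hcount.sub_const α
  rw [mul_one, sub_self] at hzero
  have hne : ∀ᶠ n : ℕ in atTop, (n * Real.log n : ℝ)⁻¹ ≠ 0 := by
    filter_upwards [eventually_ge_atTop 2] with n hn
    have := Real.log_pos (Nat.one_lt_cast.2 hn)
    positivity
  refine isLittleO_of_tendsto' (hne.mono fun n hn h ↦ absurd h hn) (hzero.congr' ?_)
  filter_upwards [eventually_ge_atTop 2, hne] with n hn hne
  have := Real.log_pos (Nat.one_lt_cast.2 hn)
  simp only [Function.comp_apply, Nat.floor_natCast, sub_div, mul_div_cancel_right₀ _ hne]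
  field_simp

theorem HasPrimeDensity.tendsto_sum_reciprocalOn (hS : HasPrimeDensity S α) :
    Tendsto (fun n : ℕ ↦ (∑ j ∈ Finset.range (n + 1), reciprocalOn S j) / Real.log (Real.log n))
      atTop (𝓝 α) := by
  have hLL := tendsto_log_log_natCast
  have hh := tendsto_sum_inv_mul_log_div_log_log
  have hsum : Tendsto (fun n ↦ ∑ j ∈ Finset.range n, (j * Real.log j : ℝ)⁻¹) atTop atTop := by
    refine (tendsto_add_atTop_iff_nat 1).1 ((hh.pos_mul_atTop one_pos hLL).congr' ?_)
    filter_upwards [hLL.eventually_ne_atTop 0] with n hn using div_mul_cancel₀ _ hn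
  have hstolz := (tendsto_sum_div_sum_of_isLittleO (fun n ↦ by positivity) hsum
    hS.isLittleO_count_div_sub).comp (tendsto_add_atTop_nat 1)
  have hboundary : Tendsto (fun n : ℕ ↦ (Nat.count (· ∈ S) (n + 1) / (n + 1) : ℝ) /
      Real.log (Real.log n)) atTop (𝓝 0) := by
    refine bdd_le_mul_tendsto_zero' 1 (.of_forall fun n ↦ ?_) hLL.inv_tendsto_atTop
    rw [abs_of_nonneg (by positivity), div_le_one (by positivity)]
    exact_mod_cast Nat.count_le (p := (· ∈ S)) (n := n + 1)
  have hlim := hboundary.add (hstolz.mul hh)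
  rw [zero_add, mul_one] at hlim
  refine hlim.congr' ?_
  filter_upwards [(hsum.comp (tendsto_add_atTop_nat 1)).eventually_ne_atTop 0] with n hn
  rw [sum_reciprocalOn_eq hS.zero_notMem, add_div]
  congr 1
  exact div_mul_div_cancel₀ hn

lemma HasPrimeDensity.tendsto_sum_reciprocalOn_mul (hS : HasPrimeDensity S α) (hα : 0 < α)
    {v : ℕ → ℝ} {β : ℝ} {r : ℕ}
    (hv : Tendsto (fun n : ℕ ↦ v n / Real.log (Real.log n) ^ r) atTop (𝓝 β)) :
    Tendsto (fun n : ℕ ↦ (∑ p ∈ Finset.range (n + 1), reciprocalOn S p * v p) /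
      Real.log (Real.log n) ^ (r + 1)) atTop (𝓝 (α * β / (r + 1))) := by
  have hLL := tendsto_log_log_natCast
  have hratio := hS.tendsto_sum_reciprocalOn
  set U : ℕ → ℝ := fun n ↦ ∑ p ∈ Finset.range n, reciprocalOn S p
  have hU : Tendsto U atTop atTop := by
    refine (tendsto_add_atTop_iff_nat 1).1 ((hratio.pos_mul_atTop hα hLL).congr' ?_)
    filter_upwards [hLL.eventually_ne_atTop 0] with n hn using div_mul_cancel₀ _ hn
  have hvU : Tendsto (fun n ↦ v n / U (n + 1) ^ r) atTop (𝓝 (β / α ^ r)) := by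
    refine (hv.div (hratio.pow r) (pow_ne_zero r hα.ne')).congr' ?_
    filter_upwards [hLL.eventually_ne_atTop 0] with n hn
    rw [Pi.div_apply, div_pow, div_div_div_cancel_right₀ (pow_ne_zero r hn)]
  have hlim := ((tendsto_sum_mul_div_pow (reciprocalOn_nonneg S) (reciprocalOn_le_one S) hU
    hvU).comp (tendsto_add_atTop_nat 1)).mul (hratio.pow (r + 1))
  have hconst : β / α ^ r / (r + 1) * α ^ (r + 1) = α * β / (r + 1) := by
    field_simp
    ring
  rw [hconst] at hlim
  refine hlim.congr' ?_
  filter_upwards [(hU.comp (tendsto_add_atTop_nat 1)).eventually_ne_atTop 0] with n hn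
  rw [div_pow]
  exact div_mul_div_cancel₀ (pow_ne_zero _ hn)

end Mertens

section MonotoneTuples

open Topology

/-- The nondecreasing tuples with `i`-th entry in `S i` and all entries at most `y`. -/
noncomputable def monotoneTuples {k : ℕ} (S : Fin k → Set ℕ) (y : ℕ) : Finset (Fin k → ℕ) :=
  {q ∈ Fintype.piFinset fun _ ↦ Finset.range (y + 1) | Monotone q ∧ ∀ i, q i ∈ S i}

/-- The sum of `1 / (q 0 ⋯ q (k - 1))` over the tuples `q` in `monotoneTuples S y`. -/
noncomputable def reciprocalSum {k : ℕ} (S : Fin k → Set ℕ) (y : ℕ) : ℝ :=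
  ∑ q ∈ monotoneTuples S y, ∏ i, (q i : ℝ)⁻¹

lemma mem_monotoneTuples {k : ℕ} {S : Fin k → Set ℕ} {y : ℕ} {q : Fin k → ℕ} :
    q ∈ monotoneTuples S y ↔ (∀ i, q i ≤ y) ∧ Monotone q ∧ ∀ i, q i ∈ S i := by
  simp [monotoneTuples]

lemma monotoneTuples_mono {k : ℕ} (S : Fin k → Set ℕ) : Monotone (monotoneTuples S) :=
  fun _ _ hyx _ hq ↦ by
    rw [mem_monotoneTuples] at hq ⊢
    exact ⟨fun i ↦ (hq.1 i).trans hyx, hq.2⟩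

lemma card_monotoneTuples_le {k : ℕ} (S : Fin k → Set ℕ) (y : ℕ) :
    (monotoneTuples S y).card ≤ (y + 1) ^ k :=
  (Finset.card_filter_le _ _).trans (by simp)

lemma monotone_snoc_iff {β : Type*} [Preorder β] {k : ℕ} {q : Fin k → β} {p : β} :
    Monotone (Fin.snoc q p : Fin (k + 1) → β) ↔ Monotone q ∧ ∀ i, q i ≤ p := by
  simp only [Monotone, Fin.forall_fin_succ', Fin.snoc_castSucc, Fin.snoc_last, forall_and]
  simp [Fin.le_last]

variable {r : ℕ} {S : Fin (r + 1) → Set ℕ}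

lemma snoc_mem_monotoneTuples {y p : ℕ} {q : Fin r → ℕ} :
    Fin.snoc q p ∈ monotoneTuples S y ↔
      p ≤ y ∧ p ∈ S (Fin.last r) ∧ q ∈ monotoneTuples (Fin.init S) p := by
  simp only [mem_monotoneTuples, monotone_snoc_iff, Fin.forall_fin_succ', Fin.snoc_castSucc,
    Fin.snoc_last, Fin.init]
  constructor
  · rintro ⟨⟨-, hpy⟩, ⟨hmono, hqp⟩, hqS, hpS⟩
    exact ⟨hpy, hpS, hqp, hmono, hqS⟩
  · rintro ⟨hpy, hpS, hqp, hmono, hqS⟩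
    exact ⟨⟨fun i ↦ (hqp i).trans hpy, hpy⟩, ⟨hmono, hqp⟩, hqS, hpS⟩

lemma reciprocalSum_succ (S : Fin (r + 1) → Set ℕ) (y : ℕ) :
    reciprocalSum S y = ∑ p ∈ Finset.range (y + 1),
      reciprocalOn (S (Fin.last r)) p * reciprocalSum (Fin.init S) p := by
  have hterm (p : ℕ) : reciprocalOn (S (Fin.last r)) p * reciprocalSum (Fin.init S) p =
      if p ∈ S (Fin.last r) then
        ∑ q ∈ monotoneTuples (Fin.init S) p, ∏ i, ((Fin.snoc q p : Fin (r + 1) → ℕ) i : ℝ)⁻¹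
      else 0 := by
    simp [reciprocalOn, reciprocalSum, Set.indicator_apply, Fin.prod_univ_castSucc,
      Finset.mul_sum, mul_comm]
  simp only [hterm, ← Finset.sum_filter]
  rw [Finset.sum_sigma', reciprocalSum]
  refine Finset.sum_bij' (fun q _ ↦ ⟨q (Fin.last r), Fin.init q⟩) (fun s _ ↦ Fin.snoc s.2 s.1)
    (fun q hq ↦ ?_) (fun s hs ↦ ?_) (by simp) (by simp) (by simp)
  · rw [← Fin.snoc_init_self q, snoc_mem_monotoneTuples] at hq
    simpa [and_assoc, Nat.lt_succ_iff] using hq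
  · rw [snoc_mem_monotoneTuples]
    simpa [and_assoc, Nat.lt_succ_iff] using hs

theorem tendsto_reciprocalSum {k : ℕ} {S : Fin k → Set ℕ} {α : Fin k → ℝ}
    (hS : ∀ i, HasPrimeDensity (S i) (α i)) (hα : ∀ i, 0 < α i) :
    Tendsto (fun n : ℕ ↦ reciprocalSum S n / Real.log (Real.log n) ^ k) atTop
      (𝓝 ((∏ i, α i) / k.factorial)) := by
  induction k with
  | zero => simp [reciprocalSum, monotoneTuples, Subsingleton.monotone, Finset.filter_true_of_mem]
  | succ r ih =>
    have hlim := (hS (Fin.last r)).tendsto_sum_reciprocalOn_mul (hα _)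
      (ih (S := Fin.init S) (fun i ↦ hS i.castSucc) fun i ↦ hα i.castSucc)
    have hconst : α (Fin.last r) * ((∏ i : Fin r, α i.castSucc) / r.factorial) / (r + 1) =
        (∏ i, α i) / (r + 1).factorial := by
      rw [Fin.prod_univ_castSucc, Nat.factorial_succ]
      push_cast
      field_simp
    rw [hconst] at hlim
    simpa only [reciprocalSum_succ] using hlim

end MonotoneTuples

section LastEntry

/-- The tuples in `monotoneTuples S x` whose product is at most `x`. -/
noncomputable def tuplesOfProdLE {k : ℕ} (S : Fin k → Set ℕ) (x : ℕ) : Finset (Fin k → ℕ) :=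
  {q ∈ monotoneTuples S x | ∏ i, q i ≤ x}

/-- The `p ∈ S` for which appending `p` to `q` keeps the tuple nondecreasing and its product at
most `x`. -/
noncomputable def lastEntries {r : ℕ} (S : Set ℕ) (q : Fin r → ℕ) (x : ℕ) : Finset ℕ :=
  {p ∈ Finset.range (x + 1) | p ∈ S ∧ (∀ i, q i ≤ p) ∧ (∏ i, q i) * p ≤ x}

variable {r : ℕ}

lemma snoc_mem_tuplesOfProdLE {S : Fin (r + 1) → Set ℕ} {q : Fin r → ℕ} {p x : ℕ} :
    Fin.snoc q p ∈ tuplesOfProdLE S x ↔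
      q ∈ monotoneTuples (Fin.init S) x ∧ p ∈ lastEntries (S (Fin.last r)) q x := by
  rw [tuplesOfProdLE, lastEntries, Finset.mem_filter, Finset.mem_filter, snoc_mem_monotoneTuples,
    Finset.mem_range, Nat.lt_succ_iff, Fin.prod_univ_castSucc]
  simp only [Fin.snoc_castSucc, Fin.snoc_last]
  constructor
  · rintro ⟨⟨hpx, hpS, hq⟩, hprod⟩
    exact ⟨monotoneTuples_mono _ hpx hq, hpx, hpS, (mem_monotoneTuples.1 hq).1, hprod⟩
  · rintro ⟨hq, hpx, hpS, hqp, hprod⟩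
    exact ⟨⟨hpx, hpS, mem_monotoneTuples.2 ⟨hqp, (mem_monotoneTuples.1 hq).2⟩⟩, hprod⟩

lemma card_tuplesOfProdLE_succ (S : Fin (r + 1) → Set ℕ) (x : ℕ) :
    (tuplesOfProdLE S x).card =
      ∑ q ∈ monotoneTuples (Fin.init S) x, (lastEntries (S (Fin.last r)) q x).card := by
  rw [← Finset.card_sigma]
  refine Finset.card_bij' (fun t _ ↦ ⟨Fin.init t, t (Fin.last r)⟩) (fun s _ ↦ Fin.snoc s.1 s.2)
    (fun t ht ↦ ?_) (fun s hs ↦ ?_) (by simp) (by simp)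
  · rw [← Fin.snoc_init_self t] at ht
    exact Finset.mem_sigma.2 (snoc_mem_tuplesOfProdLE.1 ht)
  · exact snoc_mem_tuplesOfProdLE.2 (Finset.mem_sigma.1 hs)

variable {S : Set ℕ} {q : Fin r → ℕ} {x y p : ℕ}

lemma le_div_prod_of_mem_lastEntries (hq : 0 < ∏ i, q i) (hp : p ∈ lastEntries S q x) :
    p ≤ x / ∏ i, q i := by
  rw [Nat.le_div_iff_mul_le hq, mul_comm]
  exact (Finset.mem_filter.1 hp).2.2.2

lemma card_lastEntries_le (hq : 0 < ∏ i, q i) :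
    (lastEntries S q x).card ≤ Nat.count (· ∈ S) (x / ∏ i, q i + 1) := by
  rw [Nat.count_eq_card_filter_range]
  refine Finset.card_le_card fun p hp ↦ ?_
  rw [Finset.mem_filter, Finset.mem_range]
  exact ⟨Nat.lt_succ_of_le (le_div_prod_of_mem_lastEntries hq hp), (Finset.mem_filter.1 hp).2.1⟩

lemma count_le_card_lastEntries_add (hq : 0 < ∏ i, q i) (hy : ∀ i, q i ≤ y) :
    Nat.count (· ∈ S) (x / ∏ i, q i + 1) ≤ (lastEntries S q x).card + y := by
  rw [Nat.count_eq_card_filter_range]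
  calc (Finset.filter (· ∈ S) (Finset.range (x / ∏ i, q i + 1))).card
      ≤ (lastEntries S q x ∪ Finset.range y).card := Finset.card_le_card fun p hp ↦ ?_
    _ ≤ (lastEntries S q x).card + y := by
        simpa using Finset.card_union_le (lastEntries S q x) (Finset.range y)
  rw [Finset.mem_filter, Finset.mem_range, Nat.lt_succ_iff] at hp
  rw [Finset.mem_union, Finset.mem_range, or_iff_not_imp_right, not_lt]
  intro hyp
  refine Finset.mem_filter.2 ⟨Finset.mem_range.2 (Nat.lt_succ_of_le ?_), hp.2,
    fun i ↦ (hy i).trans hyp, ?_⟩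
  · exact hp.1.trans (Nat.div_le_self _ _)
  · rw [mul_comm]
    exact (Nat.le_div_iff_mul_le hq).1 hp.1

lemma prod_pos_of_mem_monotoneTuples {S : Fin r → Set ℕ} (hS : ∀ i, 0 ∉ S i)
    (hq : q ∈ monotoneTuples S y) : 0 < ∏ i, q i :=
  Finset.prod_pos fun i _ ↦ Nat.pos_of_ne_zero fun h ↦
    hS i (h ▸ (mem_monotoneTuples.1 hq).2.2 i)

lemma lt_div_prod_of_notMem_monotoneTuples {S : Fin r → Set ℕ} {T : Set ℕ} (hS : ∀ i, 0 ∉ S i)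
    (hqx : q ∈ monotoneTuples S x) (hqy : q ∉ monotoneTuples S y) (hp : p ∈ lastEntries T q x) :
    y < x / ∏ i, q i := by
  refine lt_of_lt_of_le ?_
    (le_div_prod_of_mem_lastEntries (prod_pos_of_mem_monotoneTuples hS hqx) hp)
  contrapose! hqy
  exact mem_monotoneTuples.2 ⟨fun i ↦ ((Finset.mem_filter.1 hp).2.2.1 i).trans hqy,
    (mem_monotoneTuples.1 hqx).2⟩

lemma sub_le_card_tuplesOfProdLE {S : Fin (r + 1) → Set ℕ} {B : ℝ} (hS : ∀ i, 0 ∉ S i)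
    (hyx : y ≤ x) (hB : ∀ q ∈ monotoneTuples (Fin.init S) y,
      B * ∏ i, (q i : ℝ)⁻¹ ≤ Nat.count (· ∈ S (Fin.last r)) (x / ∏ i, q i + 1)) :
    B * reciprocalSum (Fin.init S) y - (y + 1) ^ (r + 1) ≤ (tuplesOfProdLE S x).card := by
  have hterm : ∀ q ∈ monotoneTuples (Fin.init S) y,
      B * ∏ i, (q i : ℝ)⁻¹ ≤ (lastEntries (S (Fin.last r)) q x).card + y := fun q hq ↦ by
    have hpos := prod_pos_of_mem_monotoneTuples (fun i ↦ hS i.castSucc) hq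
    exact (hB q hq).trans (mod_cast
      count_le_card_lastEntries_add hpos (mem_monotoneTuples.1 hq).1)
  have hcard : ((monotoneTuples (Fin.init S) y).card * y : ℝ) ≤ (y + 1) ^ (r + 1) := by
    rw [pow_succ]
    have := card_monotoneTuples_le (Fin.init S) y
    gcongr
    · exact_mod_cast this
    · linarith
  calc B * reciprocalSum (Fin.init S) y - (y + 1) ^ (r + 1)
      ≤ B * reciprocalSum (Fin.init S) y - (monotoneTuples (Fin.init S) y).card * y := by gcongr
    _ ≤ ∑ q ∈ monotoneTuples (Fin.init S) y, ((lastEntries (S (Fin.last r)) q x).card : ℝ) := by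
        rw [sub_le_iff_le_add, ← nsmul_eq_mul, ← Finset.sum_const, ← Finset.sum_add_distrib,
          reciprocalSum, Finset.mul_sum]
        exact Finset.sum_le_sum hterm
    _ ≤ (tuplesOfProdLE S x).card := by
        rw [card_tuplesOfProdLE_succ]
        exact_mod_cast Finset.sum_le_sum_of_subset (monotoneTuples_mono _ hyx)

lemma card_tuplesOfProdLE_le {S : Fin (r + 1) → Set ℕ} {B C : ℝ} (hS : ∀ i, 0 ∉ S i)
    (hyx : y ≤ x) (hC0 : 0 ≤ C)
    (hB : ∀ q ∈ monotoneTuples (Fin.init S) y,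
      (Nat.count (· ∈ S (Fin.last r)) (x / ∏ i, q i + 1) : ℝ) ≤ B * ∏ i, (q i : ℝ)⁻¹)
    (hC : ∀ q ∈ monotoneTuples (Fin.init S) x, y < x / ∏ i, q i →
      (Nat.count (· ∈ S (Fin.last r)) (x / ∏ i, q i + 1) : ℝ) ≤ C * ∏ i, (q i : ℝ)⁻¹) :
    ((tuplesOfProdLE S x).card : ℝ) ≤ B * reciprocalSum (Fin.init S) y +
      C * (reciprocalSum (Fin.init S) x - reciprocalSum (Fin.init S) y) := by
  have hsub := monotoneTuples_mono (Fin.init S) hyx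
  have hle : ∀ q ∈ monotoneTuples (Fin.init S) x, (lastEntries (S (Fin.last r)) q x).card ≤
      Nat.count (· ∈ S (Fin.last r)) (x / ∏ i, q i + 1) := fun q hq ↦
    card_lastEntries_le (prod_pos_of_mem_monotoneTuples (fun i ↦ hS i.castSucc) hq)
  have hlarge : ∀ q ∈ monotoneTuples (Fin.init S) x \ monotoneTuples (Fin.init S) y,
      ((lastEntries (S (Fin.last r)) q x).card : ℝ) ≤ C * ∏ i, (q i : ℝ)⁻¹ := fun q hq ↦ by
    rw [Finset.mem_sdiff] at hq
    obtain hempty | ⟨p, hp⟩ := (lastEntries (S (Fin.last r)) q x).eq_empty_or_nonempty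
    · rw [hempty, Finset.card_empty, Nat.cast_zero]
      positivity
    · exact le_trans (mod_cast hle q hq.1) (hC q hq.1
        (lt_div_prod_of_notMem_monotoneTuples (fun i ↦ hS i.castSucc) hq.1 hq.2 hp))
  rw [card_tuplesOfProdLE_succ, Nat.cast_sum, reciprocalSum, reciprocalSum,
    ← Finset.sum_sdiff hsub, ← Finset.sum_sdiff hsub, add_sub_cancel_right, add_comm,
    Finset.mul_sum, Finset.mul_sum]
  gcongr with q hq q hq
  · exact le_trans (mod_cast hle q (hsub hq)) (hB q hq)
  · exact hlarge q hq

end LastEntry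

section Counting

open Topology

variable {S : Set ℕ} {α c t : ℝ}

lemma HasPrimeDensity.eventually_count_le (hS : HasPrimeDensity S α) (hc : α < c) (ht : 0 < t) :
    ∀ᶠ x : ℕ in atTop, ∀ z : ℝ, (x : ℝ) ^ t ≤ z →
      (Nat.count (· ∈ S) (⌊z⌋₊ + 1) : ℝ) ≤ c / t * (z / Real.log x) := by
  have hpow : Tendsto (fun x : ℕ ↦ (x : ℝ) ^ t) atTop atTop :=
    (tendsto_rpow_atTop ht).comp tendsto_natCast_atTop_atTop
  filter_upwards [hpow.eventually (eventually_forall_ge_atTop.2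
    (hS.tendsto_count.eventually_lt_const hc)), hpow.eventually_gt_atTop 1,
    eventually_gt_atTop 1] with x hx hx1 hx2 z hz
  have hlogx : 0 < Real.log x := Real.log_pos (Nat.one_lt_cast.2 hx2)
  have hz1 : 1 < z := hx1.trans_le hz
  have hz0 : 0 < z := by positivity
  have hlogz : 0 < Real.log z := Real.log_pos hz1
  have hlog : t * Real.log x ≤ Real.log z := by
    rw [← Real.log_rpow (by positivity)]
    exact Real.log_le_log (by positivity) hz
  have hcount := hx z hz
  have hc0 : 0 ≤ c := le_trans (by positivity) hcount.le
  calc (Nat.count (· ∈ S) (⌊z⌋₊ + 1) : ℝ)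
      ≤ c * z / Real.log z := by
        rw [le_div_iff₀ hlogz, ← div_le_iff₀ hz0]
        exact hcount.le
    _ ≤ c * z / (t * Real.log x) := by gcongr
    _ = c / t * (z / Real.log x) := mul_div_mul_comm _ _ _ _

lemma HasPrimeDensity.eventually_le_count (hS : HasPrimeDensity S α) (hc0 : 0 ≤ c) (hc : c < α)
    (ht : 0 < t) :
    ∀ᶠ x : ℕ in atTop, ∀ z : ℝ, (x : ℝ) ^ t ≤ z → z ≤ x →
      c * (z / Real.log x) ≤ Nat.count (· ∈ S) (⌊z⌋₊ + 1) := by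
  have hpow : Tendsto (fun x : ℕ ↦ (x : ℝ) ^ t) atTop atTop :=
    (tendsto_rpow_atTop ht).comp tendsto_natCast_atTop_atTop
  filter_upwards [hpow.eventually (eventually_forall_ge_atTop.2
    (hS.tendsto_count.eventually_const_lt hc)), hpow.eventually_gt_atTop 1] with x hx hx1 z hz hzx
  have hz1 : 1 < z := hx1.trans_le hz
  have hz0 : 0 < z := by positivity
  have hlogz : 0 < Real.log z := Real.log_pos hz1
  calc c * (z / Real.log x)
      ≤ c * (z / Real.log z) := by gcongr
    _ ≤ Nat.count (· ∈ S) (⌊z⌋₊ + 1) := by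
        rw [← mul_div_assoc, div_le_iff₀ hlogz, ← le_div_iff₀ hz0]
        exact (hx z hz).le

lemma mul_prod_inv_eq_div_prod {r : ℕ} (x : ℕ) (q : Fin r → ℕ) :
    (x : ℝ) * ∏ i, (q i : ℝ)⁻¹ = x / (∏ i, q i : ℕ) := by
  rw [Finset.prod_inv_distrib, Nat.cast_prod, div_eq_mul_inv]

lemma rpow_le_div_prod {r x : ℕ} {ε : ℝ} {q : Fin r → ℕ} (hx : x ≠ 0) (hpos : 0 < ∏ i, q i)
    (hq : ∀ i, (q i : ℝ) ≤ (x : ℝ) ^ ε) : (x : ℝ) ^ (1 - r * ε) ≤ x / (∏ i, q i : ℕ) := by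
  have hx0 : (0 : ℝ) < x := Nat.cast_pos.2 (Nat.pos_of_ne_zero hx)
  have hprod : ((∏ i, q i : ℕ) : ℝ) ≤ (x : ℝ) ^ (r * ε) := by
    calc ((∏ i, q i : ℕ) : ℝ) = ∏ i, (q i : ℝ) := Nat.cast_prod _ _
      _ ≤ ∏ _i : Fin r, (x : ℝ) ^ ε := Finset.prod_le_prod (fun i _ ↦ by positivity) fun i _ ↦ hq i
      _ = (x : ℝ) ^ (r * ε) := by
        rw [Finset.prod_const, Finset.card_fin, mul_comm, Real.rpow_mul_natCast hx0.le]
  rw [Real.rpow_sub hx0, Real.rpow_one]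
  gcongr

variable {r : ℕ} {S : Fin (r + 1) → Set ℕ} {ε : ℝ}

lemma floor_rpow_le_self {x : ℕ} (hx : x ≠ 0) (hε : ε ≤ 1) : ⌊(x : ℝ) ^ ε⌋₊ ≤ x := by
  refine Nat.floor_le_of_le ?_
  simpa using Real.rpow_le_rpow_of_exponent_le (Nat.one_le_cast.2 (Nat.pos_of_ne_zero hx)) hε

lemma eventually_sub_le_card_tuplesOfProdLE (hS : ∀ i, 0 ∉ S i)
    (hlast : HasPrimeDensity (S (Fin.last r)) α) (hc0 : 0 ≤ c) (hc : c < α)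
    (hrε : r * ε < 1) (hε : ε ≤ 1) :
    ∀ᶠ x : ℕ in atTop, c * (x / Real.log x) * reciprocalSum (Fin.init S) ⌊(x : ℝ) ^ ε⌋₊ -
      (⌊(x : ℝ) ^ ε⌋₊ + 1) ^ (r + 1) ≤ (tuplesOfProdLE S x).card := by
  filter_upwards [hlast.eventually_le_count hc0 hc (sub_pos.2 hrε), eventually_ne_atTop 0]
    with x hcount hx
  refine sub_le_card_tuplesOfProdLE hS (floor_rpow_le_self hx hε) fun q hq ↦ ?_
  have hpos := prod_pos_of_mem_monotoneTuples (fun i ↦ hS i.castSucc) hq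
  have hbound := hcount (x / (∏ i, q i : ℕ)) (rpow_le_div_prod hx hpos fun i ↦
    (Nat.le_floor_iff (by positivity)).1 ((mem_monotoneTuples.1 hq).1 i))
    (div_le_self (by positivity) (Nat.one_le_cast.2 hpos))
  rw [Nat.floor_div_eq_div, ← mul_prod_inv_eq_div_prod] at hbound
  convert hbound using 1
  ring

lemma eventually_card_tuplesOfProdLE_le (hS : ∀ i, 0 ∉ S i)
    (hlast : HasPrimeDensity (S (Fin.last r)) α) (hc0 : 0 ≤ c) (hc : α < c) (hε0 : 0 < ε)
    (hrε : r * ε < 1) (hε : ε ≤ 1) :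
    ∀ᶠ x : ℕ in atTop, ((tuplesOfProdLE S x).card : ℝ) ≤
      c / (1 - r * ε) * (x / Real.log x) * reciprocalSum (Fin.init S) ⌊(x : ℝ) ^ ε⌋₊ +
      c / ε * (x / Real.log x) *
        (reciprocalSum (Fin.init S) x - reciprocalSum (Fin.init S) ⌊(x : ℝ) ^ ε⌋₊) := by
  filter_upwards [hlast.eventually_count_le hc (sub_pos.2 hrε), hlast.eventually_count_le hc hε0,
    eventually_ne_atTop 0] with x hsmall hlarge hx
  have hrw (t : ℝ) (q : Fin r → ℕ) : c / t * (x / Real.log x) * ∏ i, (q i : ℝ)⁻¹ =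
      c / t * (x / (∏ i, q i : ℕ) / Real.log x) := by
    rw [← mul_prod_inv_eq_div_prod]
    ring
  refine card_tuplesOfProdLE_le hS (floor_rpow_le_self hx hε) ?_ (fun q hq ↦ ?_) fun q _ hyq ↦ ?_
  · have := Real.log_natCast_nonneg x
    positivity
  · rw [hrw, ← Nat.floor_div_eq_div (K := ℝ)]
    exact hsmall _ (rpow_le_div_prod hx
      (prod_pos_of_mem_monotoneTuples (fun i ↦ hS i.castSucc) hq) fun i ↦
      (Nat.le_floor_iff (by positivity)).1 ((mem_monotoneTuples.1 hq).1 i))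
  · rw [hrw, ← Nat.floor_div_eq_div (K := ℝ)]
    exact hlarge _ ((Nat.lt_of_floor_lt hyq).le.trans Nat.cast_div_le)

lemma tendsto_log_log_div_log_log {u : ℕ → ℝ} (hc : 0 < c)
    (hu : Tendsto (fun x ↦ Real.log (u x) / Real.log x) atTop (𝓝 c)) :
    Tendsto (fun x ↦ Real.log (Real.log (u x)) / Real.log (Real.log x)) atTop (𝓝 1) := by
  have hlim := (((Real.continuousAt_log hc.ne').tendsto.comp hu).div_atTop
    tendsto_log_log_natCast).add_const 1
  rw [zero_add] at hlim
  refine hlim.congr' ?_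
  filter_upwards [hu.eventually_ne hc.ne', tendsto_log_log_natCast.eventually_ne_atTop 0]
    with x hux hx
  obtain ⟨hlogu, hlogx⟩ := div_ne_zero_iff.1 hux
  rw [Function.comp_apply, Real.log_div hlogu hlogx, sub_div, div_self hx, sub_add_cancel]

lemma tendsto_log_floor_rpow_div_log (hε : 0 < ε) :
    Tendsto (fun x : ℕ ↦ Real.log ⌊(x : ℝ) ^ ε⌋₊ / Real.log x) atTop (𝓝 ε) := by
  have hpow : Tendsto (fun x : ℕ ↦ (x : ℝ) ^ ε) atTop atTop :=
    (tendsto_rpow_atTop hε).comp tendsto_natCast_atTop_atTop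
  have hlog : Tendsto (fun x : ℕ ↦ Real.log x) atTop atTop :=
    Real.tendsto_log_atTop.comp tendsto_natCast_atTop_atTop
  have hlim := (((Real.continuousAt_log one_ne_zero).tendsto.comp
    (tendsto_nat_floor_div_atTop.comp hpow)).div_atTop hlog).add_const ε
  rw [zero_add] at hlim
  refine hlim.congr' ?_
  filter_upwards [hpow.eventually_ge_atTop 1, eventually_gt_atTop 1] with x hx1 hx
  have hfloor : (⌊(x : ℝ) ^ ε⌋₊ : ℝ) ≠ 0 := Nat.cast_ne_zero.2 (Nat.floor_pos.2 hx1).ne'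
  have hlogx : Real.log x ≠ 0 := (Real.log_pos (Nat.one_lt_cast.2 hx)).ne'
  simp only [Function.comp_apply]
  rw [Real.log_div hfloor (by positivity), Real.log_rpow (by positivity), sub_div,
    mul_div_cancel_right₀ _ hlogx, sub_add_cancel]

lemma tendsto_reciprocalSum_floor_rpow {k : ℕ} {S : Fin k → Set ℕ} {α : Fin k → ℝ}
    (hS : ∀ i, HasPrimeDensity (S i) (α i)) (hα : ∀ i, 0 < α i) (hε : 0 < ε) :
    Tendsto (fun x : ℕ ↦ reciprocalSum S ⌊(x : ℝ) ^ ε⌋₊ / Real.log (Real.log x) ^ k) atTop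
      (𝓝 ((∏ i, α i) / k.factorial)) := by
  have hfloor : Tendsto (fun x : ℕ ↦ ⌊(x : ℝ) ^ ε⌋₊) atTop atTop :=
    tendsto_nat_floor_atTop.comp ((tendsto_rpow_atTop hε).comp tendsto_natCast_atTop_atTop)
  have hlim := ((tendsto_reciprocalSum hS hα).comp hfloor).mul
    ((tendsto_log_log_div_log_log hε (tendsto_log_floor_rpow_div_log hε)).pow k)
  rw [one_pow, mul_one] at hlim
  refine hlim.congr' ?_
  filter_upwards [(tendsto_log_log_natCast.comp hfloor).eventually_ne_atTop 0] with x hx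
  rw [div_pow]
  exact div_mul_div_cancel₀ (pow_ne_zero k hx)

lemma tendsto_floor_rpow_add_one_pow_mul_log_div {j : ℕ} (hε0 : 0 < ε) (hjε : j * ε < 1) :
    Tendsto (fun x : ℕ ↦ (⌊(x : ℝ) ^ ε⌋₊ + 1 : ℝ) ^ j * (Real.log x / x)) atTop (𝓝 0) := by
  have hlog : Tendsto (fun x : ℕ ↦ 2 ^ j * (Real.log x / (x : ℝ) ^ (1 - j * ε))) atTop (𝓝 0) := by
    simpa using ((isLittleO_log_rpow_atTop (sub_pos.2 hjε)).tendsto_div_nhds_zero.comp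
      tendsto_natCast_atTop_atTop).const_mul ((2 : ℝ) ^ j)
  refine squeeze_zero' (.of_forall fun x ↦ ?_) ?_ hlog
  · have := Real.log_natCast_nonneg x
    positivity
  filter_upwards [eventually_ge_atTop 1] with x hx
  have hx1 : (1 : ℝ) ≤ x := Nat.one_le_cast.2 hx
  have hx0 : (0 : ℝ) < x := by linarith
  have := Real.log_natCast_nonneg x
  have hfloor : (⌊(x : ℝ) ^ ε⌋₊ + 1 : ℝ) ≤ 2 * (x : ℝ) ^ ε := by
    linarith [Nat.floor_le (Real.rpow_nonneg hx0.le ε), Real.one_le_rpow hx1 hε0.le]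
  calc (⌊(x : ℝ) ^ ε⌋₊ + 1 : ℝ) ^ j * (Real.log x / x)
      ≤ (2 * (x : ℝ) ^ ε) ^ j * (Real.log x / x) := by gcongr
    _ = 2 ^ j * (Real.log x / (x : ℝ) ^ (1 - j * ε)) := by
      rw [mul_pow, ← Real.rpow_mul_natCast hx0.le, mul_comm ε, Real.rpow_sub hx0, Real.rpow_one]
      field_simp

variable {α : Fin (r + 1) → ℝ} {b : ℝ}

lemma eventually_lt_card_tuplesOfProdLE_mul_log_div (hS : ∀ i, HasPrimeDensity (S i) (α i))
    (hα : ∀ i, 0 < α i) (hb : b < (∏ i, α i) / r.factorial) :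
    ∀ᶠ x : ℕ in atTop, b < (tuplesOfProdLE S x).card * Real.log x /
      (x * Real.log (Real.log x) ^ r) := by
  set L := (∏ i : Fin r, α i.castSucc) / r.factorial
  rw [Fin.prod_univ_castSucc, mul_comm, mul_div_assoc] at hb
  obtain ⟨c, hbc, hc0, hc⟩ : ∃ c, b < c * L ∧ 0 ≤ c ∧ c < α (Fin.last r) :=
    ((((continuous_mul_const L).tendsto _).mono_left nhdsWithin_le_nhds).eventually_const_lt hb
      |>.and (Ico_mem_nhdsLT (hα _))).exists
  obtain ⟨ε, hε0, hrε⟩ : ∃ ε : ℝ, 0 < ε ∧ (r + 1 : ℕ) * ε < 1 := by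
    refine ⟨1 / (r + 2), by positivity, ?_⟩
    rw [mul_one_div, div_lt_one (by positivity)]
    push_cast
    linarith
  push_cast at hrε
  have hW := tendsto_reciprocalSum_floor_rpow (S := Fin.init S) (fun i ↦ hS i.castSucc)
    (fun i ↦ hα i.castSucc) hε0
  have herror := (tendsto_floor_rpow_add_one_pow_mul_log_div (j := r + 1) hε0
    (by exact_mod_cast hrε)).mul (tendsto_log_log_natCast.inv_tendsto_atTop.pow r)
  have hlim := (hW.const_mul c).sub herror
  rw [zero_mul, sub_zero] at hlim
  have hr0 : 0 ≤ r * ε := by positivity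
  filter_upwards [hlim.eventually_const_lt hbc, eventually_gt_atTop 1,
    tendsto_log_log_natCast.eventually_gt_atTop 0,
    eventually_sub_le_card_tuplesOfProdLE (fun i ↦ (hS i).zero_notMem) (hS (Fin.last r)) hc0 hc
      (by linarith) (by linarith)] with x hbx hx hLL hcard
  have hlog : 0 < Real.log x := Real.log_pos (Nat.one_lt_cast.2 hx)
  refine hbx.trans_le ?_
  rw [Pi.inv_apply, inv_pow]
  calc _ = (c * (x / Real.log x) * reciprocalSum (Fin.init S) ⌊(x : ℝ) ^ ε⌋₊ -
        (⌊(x : ℝ) ^ ε⌋₊ + 1) ^ (r + 1)) * Real.log x / (x * Real.log (Real.log x) ^ r) := by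
        field_simp
    _ ≤ _ := by gcongr

lemma eventually_card_tuplesOfProdLE_mul_log_div_lt (hS : ∀ i, HasPrimeDensity (S i) (α i))
    (hα : ∀ i, 0 < α i) (hb : (∏ i, α i) / r.factorial < b) :
    ∀ᶠ x : ℕ in atTop, (tuplesOfProdLE S x).card * Real.log x /
      (x * Real.log (Real.log x) ^ r) < b := by
  set L := (∏ i : Fin r, α i.castSucc) / r.factorial
  set a := α (Fin.last r)
  rw [Fin.prod_univ_castSucc, mul_comm, mul_div_assoc] at hb
  obtain ⟨ε, ⟨hεb, hrε, hε⟩, hε0⟩ :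
      ∃ ε : ℝ, ((a + ε) / (1 - r * ε) * L < b ∧ r * ε < 1 ∧ ε < 1) ∧ 0 < ε := by
    have hcont : ContinuousAt (fun ε : ℝ ↦ (a + ε) / (1 - r * ε) * L) 0 :=
      ((continuousAt_const.add continuousAt_id).div (by fun_prop) (by simp)).mul_const L
    have hmul : ContinuousAt (fun ε : ℝ ↦ r * ε) 0 := by fun_prop
    have hnhds : ∀ᶠ ε in 𝓝 (0 : ℝ), (a + ε) / (1 - r * ε) * L < b ∧ r * ε < 1 ∧ ε < 1 :=
      (hcont.eventually_lt_const (by simpa using hb)).and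
        ((hmul.eventually_lt_const (by simp)).and (eventually_lt_nhds one_pos))
    have hright := hnhds.filter_mono (nhdsWithin_le_nhds (s := Set.Ioi 0))
    exact (hright.and self_mem_nhdsWithin).exists
  have hWy := tendsto_reciprocalSum_floor_rpow (S := Fin.init S) (fun i ↦ hS i.castSucc)
    (fun i ↦ hα i.castSucc) hε0
  have hWx := tendsto_reciprocalSum (S := Fin.init S) (fun i ↦ hS i.castSucc)
    (fun i ↦ hα i.castSucc)
  have hlim := (hWy.const_mul ((a + ε) / (1 - r * ε))).add
    ((hWx.sub hWy).const_mul ((a + ε) / ε))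
  rw [sub_self, mul_zero, add_zero] at hlim
  filter_upwards [hlim.eventually_lt_const hεb, eventually_gt_atTop 1,
    tendsto_log_log_natCast.eventually_gt_atTop 0,
    eventually_card_tuplesOfProdLE_le (fun i ↦ (hS i).zero_notMem) (hS (Fin.last r))
      (add_pos (hα _) hε0).le (lt_add_of_pos_right a hε0) hε0 hrε hε.le] with x hbx hx hLL hcard
  have hlog : 0 < Real.log x := Real.log_pos (Nat.one_lt_cast.2 hx)
  refine lt_of_le_of_lt ?_ hbx
  calc _ ≤ ((a + ε) / (1 - r * ε) * (x / Real.log x) *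
          reciprocalSum (Fin.init S) ⌊(x : ℝ) ^ ε⌋₊ + (a + ε) / ε * (x / Real.log x) *
          (reciprocalSum (Fin.init S) x - reciprocalSum (Fin.init S) ⌊(x : ℝ) ^ ε⌋₊)) *
          Real.log x / (x * Real.log (Real.log x) ^ r) := by gcongr
    _ = _ := by field_simp

theorem tendsto_card_tuplesOfProdLE_mul_log_div (hS : ∀ i, HasPrimeDensity (S i) (α i))
    (hα : ∀ i, 0 < α i) :
    Tendsto (fun x : ℕ ↦ (tuplesOfProdLE S x).card * Real.log x /
      (x * Real.log (Real.log x) ^ r)) atTop (𝓝 ((∏ i, α i) / r.factorial)) :=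
  tendsto_order.2 ⟨fun _ ↦ eventually_lt_card_tuplesOfProdLE_mul_log_div hS hα,
    fun _ ↦ eventually_card_tuplesOfProdLE_mul_log_div_lt hS hα⟩

end Counting

section PrimeTuples

lemma injOn_prod_of_monotone_prime (k : ℕ) :
    Set.InjOn (fun p : Fin k → ℕ ↦ ∏ i, p i) {p | Monotone p ∧ ∀ i, (p i).Prime} := by
  have hperm {p : Fin k → ℕ} (hp : ∀ i, (p i).Prime) :
      (List.ofFn p).Perm (Nat.primeFactorsList (∏ i, p i)) :=
    Nat.primeFactorsList_unique (List.prod_ofFn) fun a ha ↦ by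
      obtain ⟨i, rfl⟩ := List.mem_ofFn.1 ha
      exact hp i
  rintro p ⟨hp, hp'⟩ q ⟨hq, hq'⟩ (hpq : ∏ i, p i = ∏ i, q i)
  have hlist : (List.ofFn p).Perm (List.ofFn q) := (hperm hp').trans (hpq ▸ (hperm hq').symm)
  exact List.ofFn_injective (hlist.eq_of_sortedLE hp.sortedLE_ofFn hq.sortedLE_ofFn)

lemma card_filter_prod_eq_card_tuplesOfProdLE {N k : ℕ} (a : Fin k → ZMod N) (x : ℕ) :
    ((Finset.range (x + 1)).filter fun n ↦ ∃ p : Fin k → ℕ, Monotone p ∧ (∀ i, (p i).Prime) ∧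
      n = ∏ i, p i ∧ ∀ i, (p i : ZMod N) = a i).card =
      (tuplesOfProdLE (fun i ↦ primesInClass (a i)) x).card := by
  have hinj : Set.InjOn (fun p : Fin k → ℕ ↦ ∏ i, p i)
      (tuplesOfProdLE (fun i ↦ primesInClass (a i)) x) :=
    (injOn_prod_of_monotone_prime k).mono fun p hp ↦ by
      have hp := (mem_monotoneTuples.1 (Finset.mem_filter.1 hp).1).2
      exact ⟨hp.1, fun i ↦ (hp.2 i).1⟩
  rw [← Finset.card_image_of_injOn hinj]
  congr 1
  ext n
  simp only [tuplesOfProdLE, Finset.mem_filter, Finset.mem_range, Nat.lt_succ_iff,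
    Finset.mem_image, mem_monotoneTuples]
  constructor
  · rintro ⟨hn, p, hmono, hprime, rfl, hclass⟩
    have hle (i) : p i ≤ ∏ j, p j :=
      Nat.le_of_dvd (Finset.prod_pos fun j _ ↦ (hprime j).pos)
        (Finset.dvd_prod_of_mem p (Finset.mem_univ i))
    exact ⟨p, ⟨⟨fun i ↦ (hle i).trans hn, hmono, fun i ↦ ⟨hprime i, hclass i⟩⟩, hn⟩, rfl⟩
  · rintro ⟨p, ⟨⟨-, hmono, hp⟩, hn⟩, rfl⟩
    exact ⟨hn, p, hmono, fun i ↦ (hp i).1, rfl, fun i ↦ (hp i).2⟩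

end PrimeTuples

theorem stmt_7_general (N : ℕ) (hN : 1 ≤ N) (k : ℕ) (hk : 1 ≤ k)
    (m : Fin k → (ZMod N)ˣ) :
    IsEquivalent atTop
      (fun x : ℕ => (((Finset.range (x + 1)).filter
          (fun n => ∃ p : Fin k → ℕ, Monotone p ∧ (∀ i, (p i).Prime) ∧
            n = ∏ i, p i ∧ ∀ i, (p i : ZMod N) = (m i : ZMod N))).card : ℝ))
      (fun x : ℕ => (1 / (N.totient : ℝ) ^ k) *
          (x * (Real.log (Real.log x)) ^ (k - 1) /
            ((k - 1).factorial * Real.log x))) := by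
  have : NeZero N := ⟨by omega⟩
  obtain ⟨r, rfl⟩ : ∃ r, k = r + 1 := ⟨k - 1, by omega⟩
  have hφ : 0 < (N.totient : ℝ) := mod_cast Nat.totient_pos.2 hN
  have hcount := tendsto_card_tuplesOfProdLE_mul_log_div
    (fun i ↦ hasPrimeDensity_primesInClass (m i).isUnit) (fun _ ↦ inv_pos.2 hφ)
  have hne : (∏ _i : Fin (r + 1), (N.totient : ℝ)⁻¹) / r.factorial ≠ 0 := by positivity
  simp only [card_filter_prod_eq_card_tuplesOfProdLE, Nat.add_sub_cancel]
  refine (((isEquivalent_const_iff_tendsto hne).2 hcount).mul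
    (IsEquivalent.refl (u := fun x : ℕ ↦ x * Real.log (Real.log x) ^ r / Real.log x))).congr_left
      ?_ |>.congr_right ?_
  · filter_upwards [eventually_ge_atTop 2, tendsto_log_log_natCast.eventually_gt_atTop 0]
      with x hx hloglog
    have hlog : 0 < Real.log x := Real.log_pos (by exact_mod_cast hx)
    simp only [Pi.mul_apply]
    field_simp
  · refine .of_forall fun x ↦ ?_
    simp only [Pi.mul_apply, Function.const_apply, Finset.prod_const, Finset.card_fin]
    ring

theorem stmt_7 (N : ℕ) (hN : 1 ≤ N) (k : ℕ) (hk : 2 ≤ k)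
    (m : Fin k → (ZMod N)ˣ) :
    IsEquivalent atTop
      (fun x : ℕ => (((Finset.range (x + 1)).filter
          (fun n => ∃ p : Fin k → ℕ, Monotone p ∧ (∀ i, (p i).Prime) ∧
            n = ∏ i, p i ∧ ∀ i, (p i : ZMod N) = (m i : ZMod N))).card : ℝ))
      (fun x : ℕ => (1 / (N.totient : ℝ) ^ k) *
          (x * (Real.log (Real.log x)) ^ (k - 1) /
            ((k - 1).factorial * Real.log x))) :=
  stmt_7_general N hN k (by omega) m
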